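/- arXiv:0802.3434 — 3 statements merged into one kernel-verified Lean document; each statement's English description precedes it below -/
import Mathlib

section
/- Let X = {0,1}^ℕ with the shift T, and let (a_1, a_2, …) be a sequence of non-negative numbers with a_0 := 1 satisfying 1 = a_0 ≥ a_1 ≥ a_2 ≥ … and a_i − 2a_{i+1} + a_{i+2} ≥ 0 for all i ≥ 0. Then the Bowen topological entropy of the set R(a; {[0^n]}_{n≥1}) equals −h(1−a_1) + Σ_{j=0}^∞ h(a_j − 2a_{j+1} + a_{j+2}), where h(x) = −x log x (with h(0)=0). -/
open MeasureTheory Filter Topology Set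
open scoped ENNReal NNReal

/-!  General definitions: Bowen topological entropy (via covers by Bowen balls),
measure-theoretic (Kolmogorov–Sinai) entropy, generic points, saturated systems,
and the specification property. -/

variable {X : Type*}

/-- The Bowen ball of center `x`, order `n`, radius `ε` (for the metric
`d_n(x,y) = max_{0 ≤ j < n} d(T^j x, T^j y)`). -/
def bowenBall [PseudoMetricSpace X] (T : X → X) (x : X) (n : ℕ) (ε : ℝ) : Set X :=
  {y | ∀ j < n, dist (T^[j] x) (T^[j] y) < ε}

/-- `H_n^s(Z,ε)`: infimum of `Σ_i exp(-s n_i)` over countable covers of `Z` by Bowen balls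
`B_{n_i}(x_i,ε)` with all `n_i ≥ n`. -/
noncomputable def bowenH [PseudoMetricSpace X] (T : X → X) (Z : Set X) (s ε : ℝ) (n : ℕ) :
    ℝ≥0∞ :=
  ⨅ (C : Set (X × ℕ)) (_ : C.Countable) (_ : ∀ p ∈ C, n ≤ p.2)
    (_ : Z ⊆ ⋃ p ∈ C, bowenBall T p.1 p.2 ε),
    ∑' p : C, ENNReal.ofReal (Real.exp (-s * ((p : X × ℕ).2 : ℝ)))

/-- `h_top(Z,ε)`: the critical exponent of `s ↦ H^s(Z,ε) = sup_n H_n^s(Z,ε)`. -/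
noncomputable def bowenEntropyRes [PseudoMetricSpace X] (T : X → X) (Z : Set X) (ε : ℝ) :
    ℝ≥0∞ :=
  sInf ((fun s : ℝ≥0 => (s : ℝ≥0∞)) '' {s : ℝ≥0 | (⨆ n, bowenH T Z (s : ℝ) ε n) = 0})

/-- Bowen topological entropy of a subset `Z`: `h_top(Z) = lim_{ε → 0} h_top(Z,ε)`
(the limit being a supremum by monotonicity in `ε`). -/
noncomputable def bowenEntropy [PseudoMetricSpace X] (T : X → X) (Z : Set X) : ℝ≥0∞ :=
  ⨆ (ε : ℝ) (_ : 0 < ε), bowenEntropyRes T Z ε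

/-- Entropy of the partition `P ∨ T⁻¹P ∨ ⋯ ∨ T⁻⁽ⁿ⁻¹⁾P`, where a countable partition is
encoded as a function `P : X → ℕ`: it is the Shannon entropy of the map
`x ↦ (P x, P (T x), …, P (Tⁿ⁻¹ x))`. -/
noncomputable def partInfo [MeasurableSpace X] (T : X → X) (μ : Measure X) (P : X → ℕ)
    (n : ℕ) : ℝ≥0∞ :=
  ∑' l : List ℕ, ENNReal.ofReal (Real.negMulLog
    ((μ ((fun x => (List.range n).map fun j => P (T^[j] x)) ⁻¹' {l})).toReal))

/-- Measure-theoretic (Kolmogorov–Sinai) entropy `h_μ(T)`: supremum over finite measurable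
partitions `P` of `lim_n (1/n) H_μ(P ∨ T⁻¹P ∨ ⋯ ∨ T⁻⁽ⁿ⁻¹⁾P)` (the limit exists by
subadditivity, so it may be written as a `liminf`). -/
noncomputable def ksEntropy [MeasurableSpace X] (T : X → X) (μ : Measure X) : ℝ≥0∞ :=
  ⨆ (P : X → ℕ) (_ : Measurable P) (_ : (Set.range P).Finite),
    Filter.atTop.liminf fun n : ℕ => partInfo T μ P n / (n : ℝ≥0∞)

/-- `x` is a generic point for `μ` : the empirical measures `(1/n) Σ_{j<n} δ_{T^j x}`
converge to `μ` in the weak-star topology, i.e. Birkhoff averages of every continuous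
function converge to its integral. -/
def IsGeneric [TopologicalSpace X] [MeasurableSpace X] (T : X → X) (μ : Measure X)
    (x : X) : Prop :=
  ∀ f : C(X, ℝ), Tendsto (fun n : ℕ => (∑ j ∈ Finset.range n, f (T^[j] x)) / (n : ℝ))
    atTop (𝓝 (∫ y, f y ∂μ))

/-- `μ ∈ V(x)` : `μ` is a weak-star limit point of the empirical measures of `x`. -/
def IsLimitMeasure [TopologicalSpace X] [MeasurableSpace X] (T : X → X) (x : X)
    (μ : Measure X) : Prop :=
  ∃ φ : ℕ → ℕ, StrictMono φ ∧ ∀ f : C(X, ℝ),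
    Tendsto (fun m : ℕ => (∑ j ∈ Finset.range (φ m), f (T^[j] x)) / (φ m : ℝ))
      atTop (𝓝 (∫ y, f y ∂μ))

/-- A system is saturated if `h_top(G_μ) = h_μ` for every invariant Borel probability
measure `μ`. -/
def Saturated [PseudoMetricSpace X] [MeasurableSpace X] (T : X → X) : Prop :=
  ∀ μ : Measure X, IsProbabilityMeasure μ → MeasurePreserving T μ μ →
    bowenEntropy T {x | IsGeneric T μ x} = ksEntropy T μ

/-- The specification property. -/
def SpecificationProperty [PseudoMetricSpace X] (T : X → X) : Prop :=
  ∀ ε : ℝ, 0 < ε → ∃ m : ℕ, 1 ≤ m ∧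
    ∀ k : ℕ, 2 ≤ k → ∀ x : ℕ → X, ∀ a b : ℕ → ℕ,
      (∀ i < k, a i ≤ b i) →
      (∀ i, i + 1 < k → b i + m ≤ a (i + 1)) →
      ∃ y : X, ∀ i < k, ∀ n ≤ b i - a i,
        dist (T^[a i + n] y) (T^[n] (x i)) < ε

/-! Symbolic dynamics on `X = {0,1}^ℕ`. -/

/-- The metric `d(x,y) = (1/2)^(first difference)` on the symbolic space `{0,1}^ℕ`. -/
noncomputable instance : MetricSpace (ℕ → Bool) := PiNat.metricSpace

/-- The shift map on `{0,1}^ℕ`. -/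
def shift : (ℕ → Bool) → ℕ → Bool := fun x n => x (n + 1)

/-- The cylinder `[w]` of all sequences beginning with the finite word `w`. -/
def cyl (w : List Bool) : Set (ℕ → Bool) :=
  {x | ∀ i : Fin w.length, x i.1 = w.get i}

/-- `R(x,[w]) = r` : the frequency of visits of the orbit of `x` to the cylinder `[w]`
exists and equals `r`. -/
def hasFreq (w : List Bool) (x : ℕ → Bool) (r : ℝ) : Prop :=
  Filter.Tendsto (fun n : ℕ =>
      (∑ j ∈ Finset.range n, (cyl w).indicator (fun _ => (1 : ℝ)) (shift^[j] x)) / (n : ℝ))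
    Filter.atTop (nhds r)

section ConvexSequences

variable {a : ℕ → ℝ}

/-- A nonnegative antitone sequence converges to its infimum. -/
lemma tendsto_iInf_of_nonneg_antitone (hpos : ∀ n, 0 ≤ a n) (hmono : ∀ i, a (i + 1) ≤ a i) :
    Tendsto a atTop (𝓝 (⨅ n, a n)) :=
  tendsto_atTop_ciInf (antitone_nat_of_succ_le hmono) ⟨0, by rintro _ ⟨n, rfl⟩; exact hpos n⟩

lemma tendsto_sub_succ {L : ℝ} (hL : Tendsto a atTop (𝓝 L)) :
    Tendsto (fun n => a n - a (n + 1)) atTop (𝓝 0) := by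
  simpa using hL.sub ((tendsto_add_atTop_iff_nat 1).2 hL)

lemma antitone_sub_succ (hconv : ∀ i, 0 ≤ a i - 2 * a (i + 1) + a (i + 2)) :
    Antitone fun n => a n - a (n + 1) :=
  antitone_nat_of_succ_le fun n => by have := hconv n; linarith

/-- The differences of a convergent convex antitone sequence are `o(1/n)`. -/
lemma tendsto_mul_sub_succ {L : ℝ} (hL : Tendsto a atTop (𝓝 L))
    (hmono : ∀ i, a (i + 1) ≤ a i) (hconv : ∀ i, 0 ≤ a i - 2 * a (i + 1) + a (i + 2)) :
    Tendsto (fun n : ℕ => (n : ℝ) * (a n - a (n + 1))) atTop (𝓝 0) := by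
  have hanti := antitone_sub_succ hconv
  have hhalf : Tendsto (fun n : ℕ => n / 2) atTop atTop :=
    Nat.tendsto_div_const_atTop (by norm_num)
  have hlim : Tendsto (fun n : ℕ => 2 * (a (n / 2) - a n)) atTop (𝓝 0) := by
    simpa using ((hL.comp hhalf).sub hL).const_mul 2
  refine squeeze_zero (fun n => mul_nonneg n.cast_nonneg (sub_nonneg.2 (hmono n))) (fun n => ?_)
    hlim
  have hsum : ∀ m d : ℕ, (d : ℝ) * (a (m + d) - a (m + d + 1)) ≤ a m - a (m + d) := by
    intro m d
    induction d with
    | zero => simp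
    | succ d ih =>
      have h := mul_le_mul_of_nonneg_left (hanti (Nat.le_succ (m + d)))
        (by positivity : (0 : ℝ) ≤ d + 1)
      simp only [Nat.succ_eq_add_one, ← add_assoc] at h ⊢
      push_cast
      linarith
  have h := hsum (n / 2) (n - n / 2)
  rw [show n / 2 + (n - n / 2) = n by omega] at h
  have hn : (n : ℝ) ≤ 2 * ((n - n / 2 : ℕ) : ℝ) := by
    exact_mod_cast (by omega : n ≤ 2 * (n - n / 2))
  nlinarith [mul_le_mul_of_nonneg_right hn (sub_nonneg.2 (hmono n))]

lemma hasSum_second_difference {L : ℝ} (hL : Tendsto a atTop (𝓝 L))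
    (hconv : ∀ i, 0 ≤ a i - 2 * a (i + 1) + a (i + 2)) :
    HasSum (fun i => a i - 2 * a (i + 1) + a (i + 2)) (a 0 - a 1) := by
  rw [hasSum_iff_tendsto_nat_of_nonneg hconv]
  have h : ∀ n, ∑ i ∈ Finset.range n, (a i - 2 * a (i + 1) + a (i + 2))
      = (a 0 - a 1) - (a n - a (n + 1)) := by
    intro n
    induction n with
    | zero => simp
    | succ n ih => rw [Finset.sum_range_succ, ih]; ring
  simpa [h] using (tendsto_sub_succ hL).const_sub (a 0 - a 1)

lemma hasSum_succ_mul_second_difference {L : ℝ} (hL : Tendsto a atTop (𝓝 L))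
    (hmono : ∀ i, a (i + 1) ≤ a i) (hconv : ∀ i, 0 ≤ a i - 2 * a (i + 1) + a (i + 2)) :
    HasSum (fun i : ℕ => ((i : ℝ) + 1) * (a i - 2 * a (i + 1) + a (i + 2))) (a 0 - L) := by
  rw [hasSum_iff_tendsto_nat_of_nonneg fun i => mul_nonneg (by positivity) (hconv i)]
  have h : ∀ n, ∑ i ∈ Finset.range n, ((i : ℝ) + 1) * (a i - 2 * a (i + 1) + a (i + 2))
      = (a 0 - a n) - n * (a n - a (n + 1)) := by
    intro n
    induction n with
    | zero => simp
    | succ n ih => rw [Finset.sum_range_succ, ih]; push_cast; ring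
  simpa [h] using (hL.const_sub (a 0)).sub (tendsto_mul_sub_succ hL hmono hconv)

/-- For `k ≥ 0`, `∑ⱼ (j + 1 - k)⁺ pⱼ = a k - lim a`, where `p` is the second difference of `a`. -/
lemma hasSum_truncated_mul_second_difference {L : ℝ} (hL : Tendsto a atTop (𝓝 L))
    (hmono : ∀ i, a (i + 1) ≤ a i) (hconv : ∀ i, 0 ≤ a i - 2 * a (i + 1) + a (i + 2)) (k : ℕ) :
    HasSum (fun j : ℕ => ((j + 1 - k : ℕ) : ℝ) * (a j - 2 * a (j + 1) + a (j + 2))) (a k - L) := by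
  have h := hasSum_succ_mul_second_difference (a := fun i => a (i + k))
    ((tendsto_add_atTop_iff_nat k).2 hL) (fun i => by simpa [add_right_comm] using hmono (i + k))
    (fun i => by simpa [add_right_comm] using hconv (i + k))
  rw [← hasSum_nat_add_iff' k, Finset.sum_eq_zero, sub_zero]
  · rw [zero_add] at h
    refine h.congr_fun fun i => ?_
    rw [show i + k + 1 - k = i + 1 by omega, show i + 1 + k = i + k + 1 by omega,
      show i + 2 + k = i + k + 2 by omega]
    push_cast; ring
  · intro j hj
    rw [show j + 1 - k = 0 by have := Finset.mem_range.1 hj; omega]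
    simp

/-- A sequence in `[0, 1]` with finite first moment has finite Shannon entropy. -/
lemma summable_negMulLog_of_summable_mul {p : ℕ → ℝ} (hp0 : ∀ j, 0 ≤ p j) (hp1 : ∀ j, p j ≤ 1)
    (hp : Summable fun j : ℕ => (j : ℝ) * p j) : Summable fun j => Real.negMulLog (p j) := by
  have hexp : Summable fun j : ℕ => Real.exp (-(j : ℝ)) := Real.summable_exp_neg_nat
  refine Summable.of_nonneg_of_le (fun j => Real.negMulLog_nonneg (hp0 j) (hp1 j)) (fun j => ?_)
    (hexp.add hp)
  rcases (hp0 j).eq_or_lt with h | h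
  · rw [← h]; simp; positivity
  · have hlog := Real.log_le_sub_one_of_pos (div_pos (Real.exp_pos (-(j : ℝ))) h)
    rw [Real.log_div (Real.exp_pos _).ne' h.ne', Real.log_exp] at hlog
    have := mul_le_mul_of_nonneg_left hlog h.le
    rw [mul_sub, mul_sub, mul_div_cancel₀ _ h.ne'] at this
    rw [Real.negMulLog]
    linarith

/-- Near-optimal two-point code weights, allowing for vanishing masses. -/
lemma exists_code_weight {p q δ : ℝ} (hp : 0 ≤ p) (hq : 0 ≤ q) (hδ : 0 < δ) :
    ∃ c, 0 < c ∧ c < 1 ∧ p * -Real.log c + q * -Real.log (1 - c) ≤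
      Real.negMulLog p + Real.negMulLog q - Real.negMulLog (p + q) + δ := by
  have key : ∀ r : ℝ, 0 ≤ r → ∃ c, 0 < c ∧ c < 1 ∧ r * -Real.log c ≤ δ := by
    intro r hr
    refine ⟨Real.exp (-(δ / (r + 1))), Real.exp_pos _, ?_, ?_⟩
    · rw [Real.exp_lt_one_iff]; have : 0 < δ / (r + 1) := by positivity
      linarith
    · rw [Real.log_exp, neg_neg, mul_div_assoc', div_le_iff₀ (by positivity)]
      nlinarith
  rcases hp.eq_or_lt with rfl | hp
  · obtain ⟨c, h0, h1, h⟩ := key q hq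
    exact ⟨1 - c, by linarith, by linarith, by simpa using h⟩
  rcases hq.eq_or_lt with rfl | hq
  · obtain ⟨c, h0, h1, h⟩ := key p hp.le
    exact ⟨c, h0, h1, by simpa using h⟩
  have hpq : 0 < p + q := by positivity
  refine ⟨p / (p + q), by positivity, by rw [div_lt_one hpq]; linarith, ?_⟩
  rw [show 1 - p / (p + q) = q / (p + q) by field_simp; ring, Real.log_div hp.ne' hpq.ne',
    Real.log_div hq.ne' hpq.ne']
  simp only [Real.negMulLog]
  nlinarith

end ConvexSequences

section ZeroWords

/-- The indicator of the cylinder `[0^k]`. -/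
noncomputable def zeroInd (k : ℕ) (x : ℕ → Bool) : ℝ :=
  (cyl (List.replicate k false)).indicator (fun _ => 1) x

lemma mem_cyl_replicate {k : ℕ} {x : ℕ → Bool} :
    x ∈ cyl (List.replicate k false) ↔ ∀ i < k, x i = false := by
  simp [cyl, Fin.forall_iff]

open Classical in
lemma zeroInd_eq (k : ℕ) (x : ℕ → Bool) :
    zeroInd k x = if ∀ i < k, x i = false then 1 else 0 := by
  simp only [zeroInd, Set.indicator, mem_cyl_replicate]

lemma zeroInd_zero (x : ℕ → Bool) : zeroInd 0 x = 1 := by simp [zeroInd_eq]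

lemma zeroInd_nonneg (k : ℕ) (x : ℕ → Bool) : 0 ≤ zeroInd k x := by
  rw [zeroInd_eq]; split_ifs <;> norm_num

lemma zeroInd_le_one (k : ℕ) (x : ℕ → Bool) : zeroInd k x ≤ 1 := by
  rw [zeroInd_eq]; split_ifs <;> norm_num

lemma zeroInd_congr {k : ℕ} {x y : ℕ → Bool} (h : ∀ i < k, x i = y i) :
    zeroInd k x = zeroInd k y := by
  simp only [zeroInd_eq]
  congr 1
  exact propext (forall₂_congr fun i hi => by rw [h i hi])

lemma zeroInd_eq_one_of_le {k l : ℕ} {x : ℕ → Bool} (h : zeroInd l x = 1) (hkl : k ≤ l) :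
    zeroInd k x = 1 := by
  rw [zeroInd_eq] at h ⊢
  have : ∀ i < l, x i = false := by by_contra hc; simp [hc] at h
  exact if_pos fun i hi => this i (hi.trans_le hkl)

lemma zeroInd_eq_zero_or_one (k : ℕ) (x : ℕ → Bool) : zeroInd k x = 0 ∨ zeroInd k x = 1 := by
  rw [zeroInd_eq]; split_ifs <;> simp

lemma shift_iterate_apply (j : ℕ) (x : ℕ → Bool) (n : ℕ) : shift^[j] x n = x (n + j) := by
  induction j generalizing x with
  | zero => rfl
  | succ j ih => rw [Function.iterate_succ_apply, ih]; rfl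

/-- Prepend a symbol to a sequence. -/
def consSeq (b : Bool) (y : ℕ → Bool) : ℕ → Bool
  | 0 => b
  | n + 1 => y n

lemma shift_consSeq (b : Bool) (y : ℕ → Bool) : shift (consSeq b y) = y := rfl

lemma zeroInd_succ_consSeq_true (k : ℕ) (y : ℕ → Bool) : zeroInd (k + 1) (consSeq true y) = 0 := by
  rw [zeroInd_eq, if_neg]
  exact fun h => by simpa [consSeq] using h 0 k.succ_pos

lemma zeroInd_succ_consSeq_false (k : ℕ) (y : ℕ → Bool) :
    zeroInd (k + 1) (consSeq false y) = zeroInd k y := by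
  simp only [zeroInd_eq]
  congr 1
  refine propext ⟨fun h i hi => h (i + 1) (by omega), fun h i hi => ?_⟩
  cases i with
  | zero => rfl
  | succ i => exact h i (by omega)

/-- The functions `zeroInd r - zeroInd (r + 1)`, `r < K`, and `zeroInd K` are the indicators of a
partition of the space. -/
lemma zeroInd_partition (K : ℕ) (y : ℕ → Bool) :
    (∃ r, ∀ (d : ℕ → ℝ) (e : ℝ),
      ∑ i ∈ Finset.range K, (zeroInd i y - zeroInd (i + 1) y) * d i + zeroInd K y * e = d r) ∨
    (∀ (d : ℕ → ℝ) (e : ℝ),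
      ∑ i ∈ Finset.range K, (zeroInd i y - zeroInd (i + 1) y) * d i + zeroInd K y * e = e) := by
  induction K with
  | zero => right; simp [zeroInd_zero]
  | succ K ih =>
    rcases zeroInd_eq_zero_or_one (K + 1) y with h | h
    · left
      simp only [Finset.sum_range_succ, h, zero_mul, sub_zero, add_zero]
      rcases ih with ⟨r, hr⟩ | hr
      · exact ⟨r, fun d _ => hr d (d K)⟩
      · exact ⟨K, fun d _ => hr d (d K)⟩
    · right
      intro d e
      rw [Finset.sum_eq_zero, h]
      · ring
      · intro i hi
        have hi := Finset.mem_range.1 hi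
        rw [zeroInd_eq_one_of_le h (show i ≤ K + 1 by omega),
          zeroInd_eq_one_of_le h (show i + 1 ≤ K + 1 by omega)]
        ring

end ZeroWords

section CodeLength

/-- The length of the code word for `x 0` given the length `r ∧ K` of the run of zeros that starts
at position `1`, when the conditional probability of the symbol `1` is `c r` for `r < K` and `e`
for `r ≥ K`. -/
noncomputable def codeLength (K : ℕ) (c : ℕ → ℝ) (e : ℝ) (x : ℕ → Bool) : ℝ :=
  ∑ r ∈ Finset.range K,
    ((zeroInd r (shift x) - zeroInd (r + 1) (shift x) - zeroInd (r + 1) x + zeroInd (r + 2) x)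
        * -Real.log (c r) +
      (zeroInd (r + 1) x - zeroInd (r + 2) x) * -Real.log (1 - c r)) +
  ((zeroInd K (shift x) - zeroInd (K + 1) x) * -Real.log e +
    zeroInd (K + 1) x * -Real.log (1 - e))

variable {K : ℕ} {c : ℕ → ℝ} {e : ℝ}

lemma codeLength_consSeq_true (y : ℕ → Bool) : codeLength K c e (consSeq true y) =
    ∑ r ∈ Finset.range K, (zeroInd r y - zeroInd (r + 1) y) * -Real.log (c r) +
      zeroInd K y * -Real.log e := by
  simp [codeLength, shift_consSeq, zeroInd_succ_consSeq_true]

lemma codeLength_consSeq_false (y : ℕ → Bool) : codeLength K c e (consSeq false y) =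
    ∑ r ∈ Finset.range K, (zeroInd r y - zeroInd (r + 1) y) * -Real.log (1 - c r) +
      zeroInd K y * -Real.log (1 - e) := by
  simp [codeLength, shift_consSeq, zeroInd_succ_consSeq_false]

lemma exp_neg_codeLength_add (hc : ∀ r, 0 < c r ∧ c r < 1) (he : 0 < e ∧ e < 1) (y : ℕ → Bool) :
    Real.exp (-codeLength K c e (consSeq true y)) +
      Real.exp (-codeLength K c e (consSeq false y)) = 1 := by
  have key : ∀ t : ℝ, 0 < t ∧ t < 1 →
      Real.exp (- -Real.log t) + Real.exp (- -Real.log (1 - t)) = 1 := fun t ht => by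
    rw [neg_neg, neg_neg, Real.exp_log ht.1, Real.exp_log (by linarith [ht.2])]; ring
  rw [codeLength_consSeq_true, codeLength_consSeq_false]
  rcases zeroInd_partition K y with ⟨r, hr⟩ | hr
  · rw [hr (fun r => -Real.log (c r)), hr (fun r => -Real.log (1 - c r))]
    exact key _ (hc r)
  · rw [hr (fun r => -Real.log (c r)), hr (fun r => -Real.log (1 - c r))]
    exact key _ he

lemma codeLength_congr {x y : ℕ → Bool} (h : ∀ i < K + 1, x i = y i) :
    codeLength K c e x = codeLength K c e y := by
  have h1 : ∀ k ≤ K + 1, zeroInd k x = zeroInd k y := fun k hk =>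
    zeroInd_congr fun i hi => h i (by omega)
  have h2 : ∀ k ≤ K, zeroInd k (shift x) = zeroInd k (shift y) := fun k hk =>
    zeroInd_congr fun i hi => h (i + 1) (by omega)
  unfold codeLength
  rw [h1 _ le_rfl, h2 _ le_rfl]
  congr 1
  refine Finset.sum_congr rfl fun r hr => ?_
  have hr := Finset.mem_range.1 hr
  rw [h1 (r + 1) (by omega), h1 (r + 2) (by omega), h2 r (by omega), h2 (r + 1) (by omega)]

end CodeLength

section BirkhoffLimits

/-- The ergodic averages of `f` along the shift orbit of `x` converge to `r`. -/
def HasBirkhoffLimit (f : (ℕ → Bool) → ℝ) (x : ℕ → Bool) (r : ℝ) : Prop :=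
  Tendsto (fun n : ℕ => (∑ j ∈ Finset.range n, f (shift^[j] x)) / (n : ℝ)) atTop (𝓝 r)

variable {f g : (ℕ → Bool) → ℝ} {x : ℕ → Bool} {r s : ℝ}

lemma HasBirkhoffLimit.add (hf : HasBirkhoffLimit f x r) (hg : HasBirkhoffLimit g x s) :
    HasBirkhoffLimit (fun y => f y + g y) x (r + s) := by
  simpa only [HasBirkhoffLimit, Finset.sum_add_distrib, add_div] using Tendsto.add hf hg

lemma HasBirkhoffLimit.sub (hf : HasBirkhoffLimit f x r) (hg : HasBirkhoffLimit g x s) :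
    HasBirkhoffLimit (fun y => f y - g y) x (r - s) := by
  simpa only [HasBirkhoffLimit, Finset.sum_sub_distrib, sub_div] using Tendsto.sub hf hg

lemma HasBirkhoffLimit.mul_const (hf : HasBirkhoffLimit f x r) (t : ℝ) :
    HasBirkhoffLimit (fun y => f y * t) x (r * t) := by
  have h := Tendsto.mul_const t hf
  simpa only [HasBirkhoffLimit, ← Finset.sum_mul, mul_div_right_comm] using h

lemma HasBirkhoffLimit.sum {ι : Type*} (I : Finset ι) {F : ι → (ℕ → Bool) → ℝ} {R : ι → ℝ}
    (h : ∀ i ∈ I, HasBirkhoffLimit (F i) x (R i)) :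
    HasBirkhoffLimit (fun y => ∑ i ∈ I, F i y) x (∑ i ∈ I, R i) := by
  have := tendsto_finsetSum I h
  refine this.congr fun n => ?_
  rw [Finset.sum_comm, Finset.sum_div]

lemma HasBirkhoffLimit.comp_shift {k : ℕ} (hf : HasBirkhoffLimit (zeroInd k) x r) :
    HasBirkhoffLimit (fun y => zeroInd k (shift y)) x r := by
  have hbd : Tendsto (fun n : ℕ => (zeroInd k (shift^[n] x) - zeroInd k x) / (n : ℝ)) atTop
      (𝓝 0) := by
    refine squeeze_zero_norm (fun n => ?_) (tendsto_const_div_atTop_nhds_zero_nat 1)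
    rw [norm_div, RCLike.norm_natCast, Real.norm_eq_abs]
    gcongr
    rw [abs_le]
    have := zeroInd_nonneg k x
    have := zeroInd_le_one k x
    have := zeroInd_nonneg k (shift^[n] x)
    have := zeroInd_le_one k (shift^[n] x)
    constructor <;> linarith
  have h := Tendsto.add hf hbd
  rw [add_zero] at h
  refine h.congr fun n => ?_
  rw [← add_div]
  congr 1
  have h1 := Finset.sum_range_succ (fun j => zeroInd k (shift^[j] x)) n
  rw [Finset.sum_range_succ'] at h1
  simp only [Function.iterate_succ_apply', Function.iterate_zero_apply] at h1
  linarith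

/-- The asymptotic code length per symbol along an orbit with prescribed zero frequencies. -/
lemma hasBirkhoffLimit_codeLength {a : ℕ → ℝ} (hx : ∀ k, HasBirkhoffLimit (zeroInd k) x (a k))
    (K : ℕ) (c : ℕ → ℝ) (e : ℝ) :
    HasBirkhoffLimit (codeLength K c e) x
      (∑ r ∈ Finset.range K, ((a r - a (r + 1) - a (r + 1) + a (r + 2)) * -Real.log (c r) +
          (a (r + 1) - a (r + 2)) * -Real.log (1 - c r)) +
        ((a K - a (K + 1)) * -Real.log e + a (K + 1) * -Real.log (1 - e))) := by
  refine HasBirkhoffLimit.add (HasBirkhoffLimit.sum _ fun r _ => ?_) ?_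
  · exact ((((hx r).comp_shift.sub (hx (r + 1)).comp_shift).sub (hx (r + 1))).add
      (hx (r + 2))).mul_const _ |>.add (((hx (r + 1)).sub (hx (r + 2))).mul_const _)
  · exact (((hx K).comp_shift.sub (hx (K + 1))).mul_const _).add ((hx (K + 1)).mul_const _)

lemma hasBirkhoffLimit_zeroInd_zero (x : ℕ → Bool) : HasBirkhoffLimit (zeroInd 0) x 1 := by
  refine tendsto_const_nhds.congr' ?_
  filter_upwards [eventually_gt_atTop 0] with n hn
  have : (n : ℝ) ≠ 0 := by positivity
  simp [zeroInd_zero, this]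

end BirkhoffLimits

section Covers

open Classical in
/-- A finite set of sequences that realizes every word of length `n`. -/
noncomputable def wordReps : ℕ → Finset (ℕ → Bool)
  | 0 => {fun _ => false}
  | n + 1 => Finset.image₂ consSeq Finset.univ (wordReps n)

open Classical in
lemma exists_mem_wordReps (n : ℕ) (x : ℕ → Bool) : ∃ y ∈ wordReps n, ∀ i < n, x i = y i := by
  induction n generalizing x with
  | zero => exact ⟨_, Finset.mem_singleton_self _, by simp⟩
  | succ n ih =>
    obtain ⟨y, hy, h⟩ := ih (shift x)
    refine ⟨consSeq (x 0) y, Finset.mem_image₂_of_mem (Finset.mem_univ _) hy, fun i hi => ?_⟩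
    cases i with
    | zero => rfl
    | succ i => exact h i (by omega)

open Classical in
lemma card_wordReps_le (n : ℕ) : (wordReps n).card ≤ 2 ^ n := by
  induction n with
  | zero => simp [wordReps]
  | succ n ih =>
    refine (Finset.card_image₂_le _ _ _).trans ?_
    rw [Finset.card_univ, Fintype.card_bool, pow_succ']
    gcongr

/-- Kraft's inequality for code lengths. -/
lemma sum_wordReps_exp_neg_le {g : (ℕ → Bool) → ℝ}
    (hg : ∀ y, Real.exp (-g (consSeq true y)) + Real.exp (-g (consSeq false y)) = 1) (n M : ℕ) :
    ∑ x ∈ wordReps (n + M), Real.exp (-∑ j ∈ Finset.range n, g (shift^[j] x)) ≤ 2 ^ M := by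
  induction n with
  | zero => simpa using mod_cast card_wordReps_le M
  | succ n ih =>
    classical
    rw [show n + 1 + M = n + M + 1 by omega, wordReps, Finset.image₂]
    refine (Finset.sum_image_le_of_nonneg fun _ _ => (Real.exp_pos _).le).trans ?_
    rw [Finset.sum_product_right]
    refine (Finset.sum_le_sum fun y _ => ?_).trans ih
    simp only [Function.uncurry, Fintype.sum_bool, Finset.sum_range_succ', Function.iterate_succ_apply,
      shift_consSeq, Function.iterate_zero_apply, neg_add, Real.exp_add, ← mul_add, hg, mul_one,
      le_refl]

/-- If the ergodic sums of a local code length are eventually at most `n * t` on `Z`, then the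
entropy of `Z` is at most `t`. -/
lemma iSup_bowenH_eq_zero {Z : Set (ℕ → Bool)} {g : (ℕ → Bool) → ℝ} {K : ℕ} {s t ε : ℝ}
    (hloc : ∀ x y : ℕ → Bool, (∀ i < K, x i = y i) → g x = g y)
    (hg : ∀ y, Real.exp (-g (consSeq true y)) + Real.exp (-g (consSeq false y)) = 1)
    (hZ : ∀ x ∈ Z, ∀ᶠ n : ℕ in atTop, ∑ j ∈ Finset.range n, g (shift^[j] x) ≤ n * t)
    (hts : t < s) (hε : 0 < ε) : ⨆ n, bowenH shift Z s ε n = 0 := by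
  obtain ⟨m, hm⟩ := exists_pow_lt_of_lt_one hε (by norm_num : (1 / 2 : ℝ) < 1)
  set M := max m K with hM
  have hball : ∀ (n : ℕ) (x y : ℕ → Bool), (∀ i < n + M, x i = y i) →
      x ∈ bowenBall shift y n ε := by
    intro n x y h j hj
    refine lt_of_le_of_lt ?_ hm
    refine PiNat.mem_cylinder_iff_dist_le.1 fun i hi => ?_
    rw [shift_iterate_apply, shift_iterate_apply, h _ (by omega)]
  have hsum : ∀ (n : ℕ) (x y : ℕ → Bool), (∀ i < n + M, x i = y i) →
      ∑ j ∈ Finset.range n, g (shift^[j] x) = ∑ j ∈ Finset.range n, g (shift^[j] y) := by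
    intro n x y h
    refine Finset.sum_congr rfl fun j hj => hloc _ _ fun i hi => ?_
    have := Finset.mem_range.1 hj
    rw [shift_iterate_apply, shift_iterate_apply, h _ (by omega)]
  classical
  let E : ℕ → Finset (ℕ → Bool) := fun n =>
    (wordReps (n + M)).filter fun y => ∑ j ∈ Finset.range n, g (shift^[j] y) ≤ n * t
  have hcard : ∀ n, ((E n).card : ℝ) * Real.exp (-s * n) ≤ 2 ^ M * Real.exp (-(s - t)) ^ n := by
    intro n
    have h1 : ((E n).card : ℝ) * Real.exp (-(n * t)) ≤ 2 ^ M := by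
      refine le_trans ?_ (sum_wordReps_exp_neg_le hg n M)
      rw [← nsmul_eq_mul, ← Finset.sum_const]
      refine (Finset.sum_le_sum fun y hy => ?_).trans
        (Finset.sum_le_sum_of_subset_of_nonneg (Finset.filter_subset _ _)
          fun _ _ _ => (Real.exp_pos _).le)
      exact Real.exp_le_exp.2 (neg_le_neg (Finset.mem_filter.1 hy).2)
    have h2 : Real.exp (-s * n) = Real.exp (-(n * t)) * Real.exp (-(s - t)) ^ n := by
      rw [← Real.exp_nat_mul, ← Real.exp_add]; congr 1; ring
    rw [h2, ← mul_assoc]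
    gcongr
  have hbound : ∀ N, bowenH shift Z s ε N ≤
      ∑' n : ℕ, ENNReal.ofReal (2 ^ M * Real.exp (-(s - t)) ^ (n + N)) := by
    intro N
    let C : ℕ → Set ((ℕ → Bool) × ℕ) := fun n => ((E (n + N)).image fun y => (y, n + N) : Finset _)
    refine (iInf₂_le_of_le (⋃ n, C n)
      (Set.countable_iUnion fun n => (Finset.countable_toSet _)) (iInf₂_le_of_le ?_ ?_
      ((ENNReal.tsum_iUnion_le_tsum
        (fun p => ENNReal.ofReal (Real.exp (-s * (p.2 : ℝ)))) C).trans (ENNReal.tsum_le_tsum fun n => ?_))))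
    · simp only [C, Set.mem_iUnion, Finset.coe_image, Set.mem_image]
      rintro p ⟨n, y, _, rfl⟩
      exact Nat.le_add_left _ _
    · intro x hx
      obtain ⟨n, hnt, hn⟩ := ((hZ x hx).and (eventually_ge_atTop N)).exists
      obtain ⟨y, hy, hxy⟩ := exists_mem_wordReps (n + M) x
      have hyE : y ∈ E n := Finset.mem_filter.2 ⟨hy, hsum n x y hxy ▸ hnt⟩
      refine Set.mem_biUnion (x := (y, n)) (Set.mem_iUnion.2 ⟨n - N, ?_⟩) (hball n x y hxy)
      have : n - N + N = n := by omega
      simp only [C, this]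
      exact Finset.mem_coe.2 (Finset.mem_image_of_mem _ hyE)
    · rw [Finset.tsum_subtype' ((E (n + N)).image fun y => (y, n + N))
        fun p => ENNReal.ofReal (Real.exp (-s * (p.2 : ℝ)))]
      rw [Finset.sum_image fun _ _ _ _ h => congrArg Prod.fst h]
      dsimp only
      rw [Finset.sum_const, nsmul_eq_mul,
        ← ENNReal.ofReal_natCast, ← ENNReal.ofReal_mul (Nat.cast_nonneg _)]
      exact ENNReal.ofReal_le_ofReal (hcard _)
  have hr1 : Real.exp (-(s - t)) < 1 := Real.exp_lt_one_iff.mpr (by linarith)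
  have hsummable : Summable fun n => 2 ^ M * Real.exp (-(s - t)) ^ n :=
    (summable_geometric_of_lt_one (Real.exp_pos _).le hr1).mul_left _
  have htail := ENNReal.tendsto_sum_nat_add
    (fun n => ENNReal.ofReal (2 ^ M * Real.exp (-(s - t)) ^ n)) hsummable.tsum_ofReal_ne_top
  have hmono : Monotone fun N => bowenH shift Z s ε N := by
    intro N N' h
    refine le_iInf₂ fun C hC => le_iInf₂ fun hCN hZC => ?_
    exact iInf₂_le_of_le C hC (iInf₂_le_of_le (fun p hp => h.trans (hCN p hp)) hZC le_rfl)
  refine le_antisymm (iSup_le fun N => ge_of_tendsto htail ?_) bot_le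
  filter_upwards [eventually_ge_atTop N] with N' hN'
  exact (hmono hN').trans (hbound N')

end Covers

section UpperBound

variable {a : ℕ → ℝ}

/-- The entropy value is approximated from above by finite-memory code lengths. -/
lemma exists_code_rate_lt (hpos : ∀ n, 0 ≤ a n) (hmono : ∀ i, a (i + 1) ≤ a i)
    (hconv : ∀ i, 0 ≤ a i - 2 * a (i + 1) + a (i + 2))
    (hsum : Summable fun j => Real.negMulLog (a j - 2 * a (j + 1) + a (j + 2))) {t : ℝ}
    (ht : -Real.negMulLog (a 0 - a 1) +
      ∑' j, Real.negMulLog (a j - 2 * a (j + 1) + a (j + 2)) < t) :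
    ∃ (K : ℕ) (c : ℕ → ℝ) (e : ℝ), (∀ r, 0 < c r ∧ c r < 1) ∧ (0 < e ∧ e < 1) ∧
      ∑ r ∈ Finset.range K, ((a r - a (r + 1) - a (r + 1) + a (r + 2)) * -Real.log (c r) +
          (a (r + 1) - a (r + 2)) * -Real.log (1 - c r)) +
        ((a K - a (K + 1)) * -Real.log e + a (K + 1) * -Real.log (1 - e)) < t := by
  have hL := tendsto_iInf_of_nonneg_antitone hpos hmono
  have hb := (Real.continuous_negMulLog.tendsto 0).comp (tendsto_sub_succ hL)
  have ha := (Real.continuous_negMulLog.tendsto _).comp hL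
  have hlim : Tendsto (fun K => ∑ r ∈ Finset.range K,
        Real.negMulLog (a r - 2 * a (r + 1) + a (r + 2)) - Real.negMulLog (a 0 - a 1) +
      2 * Real.negMulLog (a K - a (K + 1)) +
      (Real.negMulLog (a (K + 1)) - Real.negMulLog (a K))) atTop
      (𝓝 (-Real.negMulLog (a 0 - a 1) +
        ∑' j, Real.negMulLog (a j - 2 * a (j + 1) + a (j + 2)))) := by
    have h := ((hsum.hasSum.tendsto_sum_nat.sub_const (Real.negMulLog (a 0 - a 1))).add
      (hb.const_mul 2)).add (((tendsto_add_atTop_iff_nat 1).2 ha).sub ha)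
    simp only [Real.negMulLog_zero, mul_zero, add_zero, sub_self] at h
    rw [neg_add_eq_sub]
    exact h
  obtain ⟨K, hK⟩ := (hlim.eventually_lt_const ht).exists
  obtain ⟨δ, hδ0, hδ⟩ := exists_pos_mul_lt (sub_pos.2 hK) ((K : ℝ) + 1)
  have hp : ∀ r, 0 ≤ a r - a (r + 1) - a (r + 1) + a (r + 2) := fun r => by
    have := hconv r; linarith
  choose c hc0 hc1 hc using fun r => exists_code_weight (hp r) (sub_nonneg.2 (hmono (r + 1))) hδ0
  obtain ⟨e, he0, he1, he⟩ := exists_code_weight (sub_nonneg.2 (hmono K)) (hpos (K + 1)) hδ0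
  refine ⟨K, c, e, fun r => ⟨hc0 r, hc1 r⟩, ⟨he0, he1⟩, ?_⟩
  have htel : ∑ r ∈ Finset.range K, (Real.negMulLog (a r - 2 * a (r + 1) + a (r + 2)) +
      (Real.negMulLog (a (r + 1) - a (r + 2)) - Real.negMulLog (a r - a (r + 1))) + δ) =
      ∑ r ∈ Finset.range K, Real.negMulLog (a r - 2 * a (r + 1) + a (r + 2)) +
      (Real.negMulLog (a K - a (K + 1)) - Real.negMulLog (a 0 - a 1)) + K * δ := by
    rw [Finset.sum_add_distrib, Finset.sum_add_distrib,
      Finset.sum_range_sub fun r => Real.negMulLog (a r - a (r + 1))]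
    simp
  have hle := Finset.sum_le_sum fun r (_ : r ∈ Finset.range K) => (hc r).trans_eq
    (show _ = Real.negMulLog (a r - 2 * a (r + 1) + a (r + 2)) +
      (Real.negMulLog (a (r + 1) - a (r + 2)) - Real.negMulLog (a r - a (r + 1))) + δ by
      rw [show a r - a (r + 1) - a (r + 1) + a (r + 2) + (a (r + 1) - a (r + 2)) =
        a r - a (r + 1) by ring, show a r - a (r + 1) - a (r + 1) + a (r + 2) =
        a r - 2 * a (r + 1) + a (r + 2) by ring]
      ring)
  rw [htel] at hle
  rw [sub_add_cancel] at he
  linarith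

lemma bowenEntropy_le (ha0 : a 0 = 1) (hpos : ∀ n, 0 ≤ a n) (hmono : ∀ i, a (i + 1) ≤ a i)
    (hconv : ∀ i, 0 ≤ a i - 2 * a (i + 1) + a (i + 2))
    (hsum : Summable fun j => Real.negMulLog (a j - 2 * a (j + 1) + a (j + 2))) :
    bowenEntropy shift
        {x : ℕ → Bool | ∀ k : ℕ, 1 ≤ k → hasFreq (List.replicate k false) x (a k)} ≤
      ENNReal.ofReal (-(Real.negMulLog (1 - a 1)) +
        ∑' j : ℕ, Real.negMulLog (a j - 2 * a (j + 1) + a (j + 2))) := by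
  refine iSup₂_le fun ε hε => le_of_forall_gt_imp_ge_of_dense fun s hs => ?_
  obtain ⟨s', hs', hss⟩ := ENNReal.lt_iff_exists_nnreal_btwn.1 hs
  refine (sInf_le (Set.mem_image_of_mem _ ?_)).trans hss.le
  have hlt : -Real.negMulLog (a 0 - a 1) +
      ∑' j : ℕ, Real.negMulLog (a j - 2 * a (j + 1) + a (j + 2)) < s' := by
    rw [ha0]
    rw [← ENNReal.ofReal_coe_nnreal] at hs'
    exact (ENNReal.ofReal_lt_ofReal_iff'.1 hs').1
  obtain ⟨t, hRt, hts⟩ := exists_between hlt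
  obtain ⟨K, c, e, hc, he, hR⟩ := exists_code_rate_lt hpos hmono hconv hsum hRt
  refine iSup_bowenH_eq_zero (t := t) (g := codeLength K c e) (fun x y h => codeLength_congr h)
    (exp_neg_codeLength_add hc he) (fun x hx => ?_) hts hε
  have hfreq : ∀ k, HasBirkhoffLimit (zeroInd k) x (a k) := by
    intro k
    rcases k.eq_zero_or_pos with rfl | hk
    · rw [ha0]; exact hasBirkhoffLimit_zeroInd_zero x
    · exact hx k hk
  have hlim := hasBirkhoffLimit_codeLength hfreq K c e
  filter_upwards [Tendsto.eventually_lt_const hR hlim, eventually_gt_atTop 0] with n hn hn0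
  rw [div_lt_iff₀ (by exact_mod_cast hn0)] at hn
  rw [mul_comm]
  exact hn.le

end UpperBound

section MarkedSequences

open Classical in
/-- The 0-1 sequence whose blocks `0⋯01` end at the positions `S 1, S 2, …`. -/
noncomputable def markSeq (S : ℕ → ℕ) (m : ℕ) : Bool := decide (∃ n, S (n + 1) = m + 1)

variable {S S' : ℕ → ℕ}

lemma markSeq_eq_true {m : ℕ} : markSeq S m = true ↔ ∃ n, S (n + 1) = m + 1 := by
  simp [markSeq]

lemma zeroInd_shift_markSeq (hS : StrictMono S) {k n j : ℕ} (h1 : S n ≤ j) (h2 : j < S (n + 1)) :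
    zeroInd k (shift^[j] (markSeq S)) = if j + k < S (n + 1) then 1 else 0 := by
  rw [zeroInd_eq]
  congr 1
  refine propext ⟨fun h => ?_, fun h i hi => ?_⟩
  · by_contra hc
    have ht : markSeq S (S (n + 1) - 1) = true := markSeq_eq_true.2 ⟨n, by omega⟩
    have hf := h (S (n + 1) - 1 - j) (by omega)
    rw [shift_iterate_apply, show S (n + 1) - 1 - j + j = S (n + 1) - 1 by omega, ht] at hf
    exact absurd hf (by simp)
  · rw [shift_iterate_apply, ← Bool.not_eq_true, markSeq_eq_true]
    rintro ⟨l, hl⟩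
    have h3 : n < l + 1 := hS.lt_iff_lt.1 (by omega)
    have h4 : l + 1 < n + 1 := hS.lt_iff_lt.1 (by omega)
    omega

lemma sum_zeroInd_markSeq (hS : StrictMono S) (hS0 : S 0 = 0) (k n : ℕ) :
    ∑ j ∈ Finset.range (S n), zeroInd k (shift^[j] (markSeq S)) =
      ∑ i ∈ Finset.range n, ((S (i + 1) - S i - k : ℕ) : ℝ) := by
  induction n with
  | zero => simp [hS0]
  | succ n ih =>
    have hlt := hS (Nat.lt_succ_self n)
    rw [Finset.sum_range_succ, ← ih, ← Finset.sum_range_add_sum_Ico _ hlt.le]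
    congr 1
    rw [Finset.sum_congr rfl fun j hj => zeroInd_shift_markSeq hS (Finset.mem_Ico.1 hj).1
      (Finset.mem_Ico.1 hj).2, Finset.sum_boole]
    have : (Finset.Ico (S n) (S n.succ)).filter (fun j => j + k < S (n + 1)) =
        Finset.Ico (S n) (S (n + 1) - k) := by
      ext j
      simp only [Finset.mem_filter, Finset.mem_Ico, Nat.succ_eq_add_one]
      omega
    rw [this, Nat.card_Ico, Nat.sub_right_comm]

lemma tendsto_succ_div {u : ℕ → ℝ} {σ : ℝ} (hu : Tendsto (fun n : ℕ => u n / n) atTop (𝓝 σ)) :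
    Tendsto (fun n : ℕ => u (n + 1) / n) atTop (𝓝 σ) := by
  have h := ((tendsto_add_atTop_iff_nat 1).2 hu).mul
    (tendsto_const_nhds.add (tendsto_const_div_atTop_nhds_zero_nat (1 : ℝ)) :
      Tendsto (fun n : ℕ => (1 : ℝ) + 1 / n) atTop (𝓝 (1 + 0)))
  rw [add_zero, mul_one] at h
  refine h.congr' ?_
  filter_upwards [eventually_gt_atTop 0] with n hn
  have : (n : ℝ) ≠ 0 := by positivity
  have : (n : ℝ) + 1 ≠ 0 := by positivity
  push_cast
  field_simp

lemma hasBirkhoffLimit_markSeq (hS : StrictMono S) (hS0 : S 0 = 0) {σ f : ℝ} (hσ : 0 < σ)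
    (hSσ : Tendsto (fun n : ℕ => (S n : ℝ) / n) atTop (𝓝 σ)) {k : ℕ}
    (hf : Tendsto (fun n : ℕ => (∑ i ∈ Finset.range n, ((S (i + 1) - S i - k : ℕ) : ℝ)) / n) atTop
      (𝓝 f)) :
    HasBirkhoffLimit (zeroInd k) (markSeq S) (f / σ) := by
  refine tendsto_div_of_monotone_of_exists_subseq_tendsto_div
    (fun n => ∑ j ∈ Finset.range n, zeroInd k (shift^[j] (markSeq S))) _
    (monotone_nat_of_le_succ fun n => ?_) fun b hb => ⟨S, ?_, hS.tendsto_atTop, ?_⟩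
  · rw [Finset.sum_range_succ]
    exact le_add_of_nonneg_right (zeroInd_nonneg _ _)
  · have h := (tendsto_succ_div hSσ).div hSσ hσ.ne'
    rw [div_self hσ.ne'] at h
    filter_upwards [h.eventually_lt_const hb, eventually_gt_atTop 0] with n hn hn0
    have hSn : (0 : ℝ) < S n := by exact_mod_cast hS0 ▸ hS hn0
    have hn0 : (n : ℝ) ≠ 0 := by positivity
    rw [Pi.div_apply, div_div_div_cancel_right₀ hn0, div_lt_iff₀ hSn] at hn
    exact hn.le
  · refine (hf.div hSσ hσ.ne').congr' ?_
    filter_upwards [eventually_gt_atTop 0] with n hn0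
    have hn0 : (n : ℝ) ≠ 0 := by positivity
    rw [Pi.div_apply, div_div_div_cancel_right₀ hn0, sum_zeroInd_markSeq hS hS0]

/-- A word determines the block lengths of the blocks it contains. -/
lemma eq_of_markSeq_eq (hS : StrictMono S) (hS0 : S 0 = 0) (hS' : StrictMono S') (hS0' : S' 0 = 0)
    {n : ℕ} (h : ∀ m < S n, markSeq S' m = markSeq S m) : ∀ i ≤ n, S' i = S i := by
  intro i hi
  induction i with
  | zero => rw [hS0, hS0']
  | succ i ih =>
    have hi' := ih (by omega)
    have h1 := hS (Nat.lt_succ_self i)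
    have h2 := hS' (Nat.lt_succ_self i)
    have h3 := hS.monotone hi
    simp only [Nat.succ_eq_add_one] at h1 h2
    have hle : S' (i + 1) ≤ S (i + 1) := by
      have ht := (h (S (i + 1) - 1) (by omega)).trans (markSeq_eq_true.2 ⟨i, by omega⟩)
      obtain ⟨l, hl⟩ := markSeq_eq_true.1 ht
      have hil : i < l + 1 := hS'.lt_iff_lt.1 (by omega)
      have := hS'.monotone (show i + 1 ≤ l + 1 by omega)
      omega
    refine le_antisymm hle ?_
    have ht := (h (S' (i + 1) - 1) (by omega)).symm.trans (markSeq_eq_true.2 ⟨i, by omega⟩)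
    obtain ⟨l, hl⟩ := markSeq_eq_true.1 ht
    have hil : i < l + 1 := hS.lt_iff_lt.1 (by omega)
    have := hS.monotone (show i + 1 ≤ l + 1 by omega)
    omega

end MarkedSequences

section MassDistribution

/-- The mass distribution principle. -/
lemma ofReal_le_bowenEntropy {Ω : Type*} [MeasurableSpace Ω] (P : Measure Ω)
    [IsProbabilityMeasure P] (x : Ω → ℕ → Bool) (Z : Set (ℕ → Bool)) {s : ℝ}
    (h : ∀ᵐ ω ∂P, x ω ∈ Z ∧ ∀ᶠ m : ℕ in atTop,
      P {ω' | ∀ i < m, x ω' i = x ω i} ≤ ENNReal.ofReal (Real.exp (-s * m))) :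
    ENNReal.ofReal s ≤ bowenEntropy shift Z := by
  refine le_iSup₂_of_le 1 one_pos (le_sInf ?_)
  rintro _ ⟨s', hs', rfl⟩
  refine ENNReal.ofReal_le_coe.2 (le_of_not_gt fun hlt => ?_)
  let G : ℕ → Set Ω := fun N => {ω | x ω ∈ Z ∧ ∀ m ≥ N,
    P {ω' | ∀ i < m, x ω' i = x ω i} ≤ ENNReal.ofReal (Real.exp (-s * m))}
  have hG : ∃ N, P (G N) ≠ 0 := by
    by_contra! hc
    have hnull : ∀ᵐ ω ∂P, ω ∉ ⋃ N, G N := measure_eq_zero_iff_ae_notMem.1 (measure_iUnion_null hc)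
    obtain ⟨ω, ⟨hZ, hm⟩, hn⟩ := (h.and hnull).exists
    obtain ⟨N, hN⟩ := eventually_atTop.1 hm
    exact hn (Set.mem_iUnion.2 ⟨N, hZ, hN⟩)
  obtain ⟨N, hN⟩ := hG
  refine hN (le_antisymm ?_ bot_le)
  have hs0 : bowenH shift Z s' 1 N = 0 := le_antisymm ((le_iSup _ N).trans_eq hs') bot_le
  refine le_of_le_of_eq (le_iInf₂ fun C hC => le_iInf₂ fun hCN hZC => ?_) hs0
  have : Countable C := hC
  have hsub : G N ⊆ ⋃ p : C, G N ∩ x ⁻¹' bowenBall shift p.1.1 p.1.2 1 := by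
    intro ω hω
    obtain ⟨p, hp, hmem⟩ := Set.mem_iUnion₂.1 (hZC hω.1)
    exact Set.mem_iUnion.2 ⟨⟨p, hp⟩, hω, hmem⟩
  refine (measure_mono hsub).trans ((measure_iUnion_le _).trans (ENNReal.tsum_le_tsum fun p => ?_))
  have hball : ∀ y ∈ bowenBall shift p.1.1 p.1.2 1, ∀ i < p.1.2, y i = p.1.1 i := by
    intro y hy i hi
    have := PiNat.apply_eq_of_dist_lt (n := 0) ((hy i hi).trans_eq (pow_zero _).symm) le_rfl
    rw [shift_iterate_apply, shift_iterate_apply, zero_add] at this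
    exact this.symm
  rcases Set.eq_empty_or_nonempty (G N ∩ x ⁻¹' bowenBall shift p.1.1 p.1.2 1) with he | ⟨ω, hω, hωp⟩
  · rw [he, measure_empty]; exact bot_le
  · refine (measure_mono fun ω' hω' i hi => ?_).trans ((hω.2 p.1.2 (hCN _ p.2)).trans
      (ENNReal.ofReal_le_ofReal (Real.exp_le_exp.2 ?_)))
    · exact (hball _ hω'.2 i hi).trans (hball _ hωp i hi).symm
    · exact mul_le_mul_of_nonneg_right (by linarith) (Nat.cast_nonneg _)

end MassDistribution

section RenewalProcess

open ProbabilityTheory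

/-- The strong law of large numbers for the coordinates of a product measure. -/
lemma ae_tendsto_average_infinitePi (Q : Measure ℕ) [IsProbabilityMeasure Q] {f : ℕ → ℝ}
    (hf : Integrable f Q) :
    ∀ᵐ ω ∂Measure.infinitePi (fun _ : ℕ => Q),
      Tendsto (fun n : ℕ => (∑ i ∈ Finset.range n, f (ω i)) / n) atTop (𝓝 (∫ j, f j ∂Q)) := by
  have hmp := fun i => measurePreserving_eval_infinitePi (fun _ : ℕ => Q) i
  have hfm : Measurable f := measurable_from_top
  have hint : Integrable (fun ω : ℕ → ℕ => f (ω 0)) (Measure.infinitePi fun _ : ℕ => Q) :=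
    (hmp 0).integrable_comp_of_integrable hf
  have h := strong_law_ae_real (μ := Measure.infinitePi fun _ : ℕ => Q)
    (fun i (ω : ℕ → ℕ) => f (ω i)) hint
    (fun i j hij => (iIndepFun_infinitePi (P := fun _ : ℕ => Q) (X := fun _ => f)
      fun _ => hfm).indepFun hij)
    (fun i => by
      have hid : ∀ i, Measure.map (fun ω : ℕ → ℕ => f (ω i)) (Measure.infinitePi fun _ : ℕ => Q) =
          Measure.map f Q := fun i => by
        conv_rhs => rw [← (hmp i).map_eq, Measure.map_map hfm (measurable_pi_apply i)]
        rfl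
      exact ⟨(hfm.comp (measurable_pi_apply i)).aemeasurable,
        (hfm.comp (measurable_pi_apply 0)).aemeasurable, by rw [hid, hid]⟩)
  have hexp : ∫ ω : ℕ → ℕ, f (ω 0) ∂(Measure.infinitePi fun _ : ℕ => Q) = ∫ j, f j ∂Q := by
    conv_rhs => rw [← (hmp 0).map_eq]
    rw [integral_map (measurable_pi_apply 0).aemeasurable hfm.aestronglyMeasurable]
  rwa [hexp] at h

/-- The probability measure on `ℕ` with given masses. -/
noncomputable def pmfOfHasSum {q : ℕ → ℝ} (hq0 : ∀ j, 0 ≤ q j) (hq : HasSum q 1) : PMF ℕ :=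
  ⟨fun j => ENNReal.ofReal (q j), by
    rw [ENNReal.summable.hasSum_iff, ← ENNReal.ofReal_tsum_of_nonneg hq0 hq.summable, hq.tsum_eq,
      ENNReal.ofReal_one]⟩

lemma toMeasure_pmfOfHasSum_singleton {q : ℕ → ℝ} (hq0 : ∀ j, 0 ≤ q j) (hq : HasSum q 1) (j : ℕ) :
    (pmfOfHasSum hq0 hq).toMeasure {j} = ENNReal.ofReal (q j) :=
  PMF.toMeasure_apply_singleton _ _ (MeasurableSet.singleton j)

lemma integrable_pmfOfHasSum {q : ℕ → ℝ} (hq0 : ∀ j, 0 ≤ q j) (hq : HasSum q 1) {f : ℕ → ℝ}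
    (hf0 : ∀ j, 0 ≤ f j) {m : ℝ} (hf : HasSum (fun j => f j * q j) m) :
    Integrable f (pmfOfHasSum hq0 hq).toMeasure ∧ ∫ j, f j ∂(pmfOfHasSum hq0 hq).toMeasure = m := by
  have hint : Integrable f (pmfOfHasSum hq0 hq).toMeasure := by
    rw [← lintegral_ofReal_ne_top_iff_integrable measurable_from_top.aestronglyMeasurable
      (Eventually.of_forall hf0), lintegral_countable']
    simp only [toMeasure_pmfOfHasSum_singleton, ← ENNReal.ofReal_mul (hf0 _)]
    exact hf.summable.tsum_ofReal_ne_top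
  refine ⟨hint, ?_⟩
  rw [PMF.integral_eq_tsum _ _ hint, ← hf.tsum_eq]
  refine tsum_congr fun j => ?_
  rw [smul_eq_mul, mul_comm]
  congr 1
  exact ENNReal.toReal_ofReal (hq0 j)

end RenewalProcess

section LowerBound

/-- The total length of the deterministic blocks of zeros inserted before the `n`-th mark. -/
noncomputable def padding (l : ℝ) (n : ℕ) : ℕ := ⌊l * ((Nat.sqrt n ^ 2 : ℕ) : ℝ)⌋₊

variable {l : ℝ}

lemma padding_mono (hl : 0 ≤ l) : Monotone (padding l) := fun m n h => by
  unfold padding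
  have := Nat.sqrt_le_sqrt h
  gcongr

lemma padding_zero : padding l 0 = 0 := by simp [padding]

lemma tendsto_natSqrt_div : Tendsto (fun n : ℕ => (Nat.sqrt n : ℝ) / n) atTop (𝓝 0) := by
  refine squeeze_zero (fun n => by positivity) (fun n => ?_)
    (tendsto_inv_atTop_zero.comp (Real.tendsto_sqrt_atTop.comp tendsto_natCast_atTop_atTop))
  rcases n.eq_zero_or_pos with rfl | hn
  · simp
  · have hn' : (0 : ℝ) < n := by exact_mod_cast hn
    rw [div_le_iff₀ hn']
    refine Real.nat_sqrt_le_real_sqrt.trans_eq ?_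
    simp only [Function.comp]
    rw [inv_mul_eq_div, Real.div_sqrt]

lemma tendsto_padding_div (hl : 0 ≤ l) :
    Tendsto (fun n : ℕ => (padding l n : ℝ) / n) atTop (𝓝 l) := by
  rw [tendsto_iff_norm_sub_tendsto_zero]
  have hlim := (tendsto_const_div_atTop_nhds_zero_nat (1 : ℝ)).add
    (tendsto_natSqrt_div.const_mul (2 * l))
  rw [mul_zero, add_zero] at hlim
  refine squeeze_zero' (Eventually.of_forall fun n => norm_nonneg _) ?_ hlim
  filter_upwards [eventually_gt_atTop 0] with n hn
  have hn' : (0 : ℝ) < n := by exact_mod_cast hn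
  have h1 : ((Nat.sqrt n ^ 2 : ℕ) : ℝ) ≤ n := by exact_mod_cast Nat.sqrt_le' n
  have h2 : (n : ℝ) ≤ ((Nat.sqrt n ^ 2 : ℕ) : ℝ) + 2 * Nat.sqrt n := by
    have := Nat.sqrt_le_add n
    exact_mod_cast (by nlinarith : n ≤ Nat.sqrt n ^ 2 + 2 * Nat.sqrt n)
  have h3 := Nat.floor_le (mul_nonneg hl (Nat.cast_nonneg (α := ℝ) (Nat.sqrt n ^ 2)))
  have h4 := Nat.lt_floor_add_one (l * ((Nat.sqrt n ^ 2 : ℕ) : ℝ))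
  change (padding l n : ℝ) ≤ _ at h3
  change _ < (padding l n : ℝ) + 1 at h4
  have h5 := mul_le_mul_of_nonneg_left h1 hl
  have h6 := mul_le_mul_of_nonneg_left h2 hl
  have hs : (0 : ℝ) ≤ Nat.sqrt n := Nat.cast_nonneg _
  rw [show (padding l n : ℝ) / n - l = ((padding l n : ℝ) - l * n) / n by field_simp, norm_div,
    Real.norm_of_nonneg hn'.le, mul_div_assoc', ← add_div, Real.norm_eq_abs]
  gcongr
  rw [abs_le]
  constructor <;> nlinarith [mul_nonneg hl hs]

/-- The position after the `n`-th mark when the gaps are `ω` plus the deterministic padding. -/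
noncomputable def markPos (l : ℝ) (ω : ℕ → ℕ) (n : ℕ) : ℕ :=
  ∑ i ∈ Finset.range n, (ω i + 1) + padding l n

lemma markPos_zero (ω : ℕ → ℕ) : markPos l ω 0 = 0 := by simp [markPos, padding_zero]

lemma markPos_succ_sub (hl : 0 ≤ l) (ω : ℕ → ℕ) (n : ℕ) :
    markPos l ω (n + 1) - markPos l ω n = ω n + 1 + (padding l (n + 1) - padding l n) := by
  have := padding_mono hl (Nat.le_succ n)
  simp only [markPos, Finset.sum_range_succ, Nat.succ_eq_add_one] at this ⊢
  omega

lemma strictMono_markPos (hl : 0 ≤ l) (ω : ℕ → ℕ) : StrictMono (markPos l ω) :=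
  strictMono_nat_of_lt_succ fun n => by have := markPos_succ_sub hl ω n; omega

lemma tendsto_markPos_div (hl : 0 ≤ l) {ω : ℕ → ℕ} {m : ℝ}
    (h : Tendsto (fun n : ℕ => (∑ i ∈ Finset.range n, ((ω i + 1 - 0 : ℕ) : ℝ)) / n) atTop (𝓝 m)) :
    Tendsto (fun n : ℕ => (markPos l ω n : ℝ) / n) atTop (𝓝 (m + l)) := by
  refine (h.add (tendsto_padding_div hl)).congr fun n => ?_
  rw [← add_div, markPos]
  push_cast [Nat.sub_zero]
  rfl

lemma tendsto_truncated_gaps_div (hl : 0 ≤ l) {ω : ℕ → ℕ} {m : ℝ} {k : ℕ}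
    (h : Tendsto (fun n : ℕ => (∑ i ∈ Finset.range n, ((ω i + 1 - k : ℕ) : ℝ)) / n) atTop (𝓝 m)) :
    Tendsto (fun n : ℕ => (∑ i ∈ Finset.range n,
      ((markPos l ω (i + 1) - markPos l ω i - k : ℕ) : ℝ)) / n) atTop (𝓝 (m + l)) := by
  have htel : ∀ n, ∑ i ∈ Finset.range n, (padding l (i + 1) - padding l i) = padding l n := fun n => by
    rw [Finset.sum_range_tsub (padding_mono hl), padding_zero, Nat.sub_zero]
  have hsqrt : ∀ n, ∑ i ∈ Finset.range n, (Nat.sqrt (i + 1) - Nat.sqrt i) = Nat.sqrt n := fun n => by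
    rw [Finset.sum_range_tsub (fun _ _ h => Nat.sqrt_le_sqrt h), Nat.sqrt_zero, Nat.sub_zero]
  have hup : ∀ n, ∑ i ∈ Finset.range n, (markPos l ω (i + 1) - markPos l ω i - k) ≤
      ∑ i ∈ Finset.range n, (ω i + 1 - k) + padding l n := fun n => by
    rw [← htel, ← Finset.sum_add_distrib]
    refine Finset.sum_le_sum fun i _ => ?_
    rw [markPos_succ_sub hl]
    omega
  have hlow : ∀ n, ∑ i ∈ Finset.range n, (ω i + 1 - k) + padding l n ≤
      ∑ i ∈ Finset.range n, (markPos l ω (i + 1) - markPos l ω i - k) + k * Nat.sqrt n := fun n => by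
    rw [← htel, ← hsqrt, Finset.mul_sum, ← Finset.sum_add_distrib, ← Finset.sum_add_distrib]
    refine Finset.sum_le_sum fun i _ => ?_
    rw [markPos_succ_sub hl]
    have hle : Nat.sqrt i ≤ Nat.sqrt (i + 1) := Nat.sqrt_le_sqrt (Nat.le_succ i)
    rcases hle.eq_or_lt with he | hlt
    · have : padding l (i + 1) = padding l i := by rw [padding, padding, he]
      omega
    · have : k * 1 ≤ k * (Nat.sqrt (i + 1) - Nat.sqrt i) := Nat.mul_le_mul_left k (by omega)
      omega
  have hsum := h.add (tendsto_padding_div hl)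
  have hsum' := hsum.sub (tendsto_natSqrt_div.const_mul (k : ℝ))
  rw [mul_zero, sub_zero] at hsum'
  refine tendsto_of_tendsto_of_tendsto_of_le_of_le hsum' hsum (fun n => ?_) fun n => ?_
  · have : ∑ i ∈ Finset.range n, ((ω i + 1 - k : ℕ) : ℝ) + padding l n ≤
        ∑ i ∈ Finset.range n, ((markPos l ω (i + 1) - markPos l ω i - k : ℕ) : ℝ) +
          k * Nat.sqrt n := by exact_mod_cast hlow n
    simp only [mul_div_assoc', ← add_div, ← sub_div]
    gcongr
    linarith
  · have : ∑ i ∈ Finset.range n, ((markPos l ω (i + 1) - markPos l ω i - k : ℕ) : ℝ) ≤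
        ∑ i ∈ Finset.range n, ((ω i + 1 - k : ℕ) : ℝ) + padding l n := by exact_mod_cast hup n
    simp only [← add_div]
    gcongr

/-- Words of length `markPos l ω n` have probability at most the product of the gap masses. -/
lemma measure_markSeq_eq_le {q : ℕ → ℝ} (hq0 : ∀ j, 0 ≤ q j) (hq : HasSum q 1) (hl : 0 ≤ l)
    (ω : ℕ → ℕ) (n : ℕ) :
    Measure.infinitePi (fun _ : ℕ => (pmfOfHasSum hq0 hq).toMeasure)
      {ω' | ∀ i < markPos l ω n, markSeq (markPos l ω') i = markSeq (markPos l ω) i} ≤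
    ENNReal.ofReal (Real.exp (-∑ i ∈ Finset.range n, -Real.log (q (ω i)))) := by
  have hsub : {ω' | ∀ i < markPos l ω n, markSeq (markPos l ω') i = markSeq (markPos l ω) i} ⊆
      Set.pi (Finset.range n : Set ℕ) fun i => {ω i} := by
    intro ω' h i hi
    have hi := Finset.mem_range.1 (Finset.mem_coe.1 hi)
    have heq := eq_of_markSeq_eq (strictMono_markPos hl ω) (markPos_zero ω)
      (strictMono_markPos hl ω') (markPos_zero ω') h
    have h1 := markPos_succ_sub hl ω i
    have h2 := markPos_succ_sub hl ω' i
    rw [heq i hi.le, heq (i + 1) hi] at h2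
    have heq' : ω' i = ω i := by omega
    exact heq'
  refine (measure_mono hsub).trans ?_
  rw [Measure.infinitePi_pi _ fun _ _ => MeasurableSet.singleton _, Finset.sum_neg_distrib, neg_neg,
    Real.exp_sum, ENNReal.ofReal_prod_of_nonneg fun _ _ => (Real.exp_pos _).le]
  refine Finset.prod_le_prod' fun i _ => ?_
  rw [toMeasure_pmfOfHasSum_singleton]
  exact ENNReal.ofReal_le_ofReal (Real.le_exp_log _)

/-- If the information `I` in the first `n` blocks satisfies `I n / n → κ` and the block ends
satisfy `S n / n → σ`, then any rate `s < κ / σ` is eventually achieved at all times. -/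
lemma eventually_exists_block {S : ℕ → ℕ} (hS : StrictMono S) {I : ℕ → ℝ} {κ σ s : ℝ}
    (hσ : 0 < σ) (hs : 0 ≤ s) (hsκ : s < κ / σ)
    (hI : Tendsto (fun n : ℕ => I n / n) atTop (𝓝 κ))
    (hSσ : Tendsto (fun n : ℕ => (S n : ℝ) / n) atTop (𝓝 σ)) :
    ∀ᶠ m : ℕ in atTop, ∃ n, S n ≤ m ∧ s * m ≤ I n := by
  have hlim := hI.sub ((tendsto_succ_div hSσ).const_mul s)
  have hpos : 0 < κ - s * σ := by rw [lt_div_iff₀ hσ] at hsκ; linarith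
  obtain ⟨N, hN⟩ := eventually_atTop.1
    ((hlim.eventually_const_lt hpos).and (eventually_gt_atTop 0))
  filter_upwards [eventually_ge_atTop (S N)] with m hm
  obtain ⟨n, hn1, hn2⟩ : ∃ n, S n ≤ m ∧ m < S (n + 1) := by
    have hex : ∃ n, m < S (n + 1) := ⟨m, (Nat.lt_succ_self m).trans_le (hS.id_le _)⟩
    classical
    refine ⟨Nat.find hex, ?_, Nat.find_spec hex⟩
    rcases h : Nat.find hex with _ | n
    · exact (hS.monotone N.zero_le).trans hm
    · exact not_lt.1 (Nat.find_min hex (show n < Nat.find hex by omega))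
  have hNn : N ≤ n := by
    have := hS.lt_iff_lt.1 (hm.trans_lt hn2); omega
  refine ⟨n, hn1, ?_⟩
  obtain ⟨h1, h2⟩ := hN n hNn
  rw [mul_div_assoc', ← sub_div] at h1
  have h3 := (div_pos_iff_of_pos_right (by exact_mod_cast h2)).1 h1
  have h4 : (m : ℝ) ≤ S (n + 1) := by exact_mod_cast hn2.le
  have := mul_le_mul_of_nonneg_left h4 hs
  linarith

variable {a : ℕ → ℝ}

lemma le_bowenEntropy (ha0 : a 0 = 1) (hpos : ∀ n, 0 ≤ a n) (hmono : ∀ i, a (i + 1) ≤ a i)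
    (hconv : ∀ i, 0 ≤ a i - 2 * a (i + 1) + a (i + 2)) (ha1 : a 1 < 1)
    (hsum : Summable fun j => Real.negMulLog (a j - 2 * a (j + 1) + a (j + 2))) {s : ℝ}
    (hs : 0 ≤ s) (hsH : s < -(Real.negMulLog (1 - a 1)) +
        ∑' j : ℕ, Real.negMulLog (a j - 2 * a (j + 1) + a (j + 2))) :
    ENNReal.ofReal s ≤ bowenEntropy shift
        {x : ℕ → Bool | ∀ k : ℕ, 1 ≤ k → hasFreq (List.replicate k false) x (a k)} := by
  have hL := tendsto_iInf_of_nonneg_antitone hpos hmono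
  set L := ⨅ n, a n
  have hL0 : 0 ≤ L := ge_of_tendsto' hL hpos
  set B := 1 - a 1 with hB
  have hB0 : 0 < B := by linarith
  set q : ℕ → ℝ := fun j => (a j - 2 * a (j + 1) + a (j + 2)) / B with hqdef
  have hq0 : ∀ j, 0 ≤ q j := fun j => div_nonneg (hconv j) hB0.le
  have hq : HasSum q 1 := by
    have h := (hasSum_second_difference hL hconv).div_const B
    rwa [ha0, ← hB, div_self hB0.ne'] at h
  have hq1 : ∀ j, q j ≤ 1 := fun j => le_hasSum hq j fun i _ => hq0 i
  have hgap : ∀ k, HasSum (fun j : ℕ => ((j + 1 - k : ℕ) : ℝ) * q j) ((a k - L) / B) := fun k => by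
    simpa only [hqdef, mul_div_assoc] using
      (hasSum_truncated_mul_second_difference hL hmono hconv k).div_const B
  set H := -Real.negMulLog B + ∑' j : ℕ, Real.negMulLog (a j - 2 * a (j + 1) + a (j + 2))
  have hinfo : HasSum (fun j => -Real.log (q j) * q j) (H / B) := by
    have h := (hsum.hasSum.div_const B).add (hq.mul_right (Real.log B))
    have hval : (∑' j : ℕ, Real.negMulLog (a j - 2 * a (j + 1) + a (j + 2))) / B + 1 * Real.log B =
        H / B := by
      simp only [H, Real.negMulLog]; field_simp; ring
    rw [hval] at h
    refine h.congr_fun fun j => ?_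
    rcases (hconv j).eq_or_lt with h0 | h0
    · simp [hqdef, ← h0]
    · simp only [hqdef, Real.negMulLog]
      rw [Real.log_div h0.ne' hB0.ne']
      field_simp; ring
  have hi := integrable_pmfOfHasSum hq0 hq
    (fun j => neg_nonneg.2 (Real.log_nonpos (hq0 j) (hq1 j))) hinfo
  have hg := fun k => integrable_pmfOfHasSum hq0 hq (fun j => Nat.cast_nonneg (j + 1 - k)) (hgap k)
  have hl : 0 ≤ L / B := div_nonneg hL0 hB0.le
  refine ofReal_le_bowenEntropy (Measure.infinitePi fun _ : ℕ => (pmfOfHasSum hq0 hq).toMeasure)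
    (fun ω => markSeq (markPos (L / B) ω)) _ ?_
  filter_upwards [ae_tendsto_average_infinitePi _ hi.1,
    ae_all_iff.2 fun k => ae_tendsto_average_infinitePi _ (hg k).1] with ω hω hωk
  rw [hi.2] at hω
  simp only [fun k => (hg k).2] at hωk
  have hS := strictMono_markPos hl ω
  have hσ : 0 < 1 / B := by positivity
  have hSσ : Tendsto (fun n : ℕ => (markPos (L / B) ω n : ℝ) / n) atTop (𝓝 (1 / B)) := by
    have h := tendsto_markPos_div hl (hωk 0)
    rwa [ha0, ← add_div, sub_add_cancel] at h
  refine ⟨fun k _ => ?_, ?_⟩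
  · have h := hasBirkhoffLimit_markSeq hS (markPos_zero ω) hσ hSσ
      (tendsto_truncated_gaps_div hl (hωk k))
    rwa [← add_div, sub_add_cancel, div_div_div_cancel_right₀ hB0.ne', div_one] at h
  · filter_upwards [eventually_exists_block hS hσ hs
      (by rwa [div_div_div_cancel_right₀ hB0.ne', div_one]) hω hSσ] with m ⟨n, hnm, hn⟩
    refine le_trans (measure_mono ?_) ((measure_markSeq_eq_le hq0 hq hl ω n).trans
      (ENNReal.ofReal_le_ofReal (Real.exp_le_exp.2 ?_)))
    · exact fun ω' h i hi => h i (hi.trans_le hnm)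
    · linarith

end LowerBound

/-- **Theorem 1.4 (second part).** If `1 = a_0 ≥ a_1 ≥ ⋯` and
`a_i - 2a_{i+1} + a_{i+2} ≥ 0` for all `i`, then the Bowen topological entropy of
`R(a; {[0^n]}_{n≥1})` equals `-h(1-a_1) + Σ_{j≥0} h(a_j - 2a_{j+1} + a_{j+2})`, where
`h(x) = -x log x`. -/
theorem entropy_of_frequency_set (a : ℕ → ℝ) (ha0 : a 0 = 1) (hpos : ∀ n, 0 ≤ a n)
    (hmono : ∀ i : ℕ, a (i + 1) ≤ a i)
    (hconv : ∀ i : ℕ, 0 ≤ a i - 2 * a (i + 1) + a (i + 2)) :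
    bowenEntropy shift
        {x : ℕ → Bool | ∀ k : ℕ, 1 ≤ k → hasFreq (List.replicate k false) x (a k)} =
      ENNReal.ofReal (-(Real.negMulLog (1 - a 1)) +
        ∑' j : ℕ, Real.negMulLog (a j - 2 * a (j + 1) + a (j + 2))) := by
  have hL := tendsto_iInf_of_nonneg_antitone hpos hmono
  have hp := hasSum_second_difference hL hconv
  have hp1 : ∀ j, a j - 2 * a (j + 1) + a (j + 2) ≤ 1 := fun j =>
    (le_hasSum hp j fun i _ => hconv i).trans (by linarith [hpos 1])
  have hsum : Summable fun j => Real.negMulLog (a j - 2 * a (j + 1) + a (j + 2)) := by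
    refine summable_negMulLog_of_summable_mul hconv hp1 ?_
    simpa using (hasSum_truncated_mul_second_difference hL hmono hconv 1).summable
  refine le_antisymm (bowenEntropy_le ha0 hpos hmono hconv hsum) ?_
  rcases (ha0 ▸ hmono 0 : a 1 ≤ 1).eq_or_lt with ha1 | ha1
  · rw [ha0, ha1, sub_self] at hp
    have hzero := (hasSum_zero_iff_of_nonneg hconv).1 hp
    simp [fun j => congrFun hzero j, ha1]
  · refine le_of_forall_lt fun t ht => ?_
    obtain ⟨s, hts, hs⟩ := ENNReal.lt_iff_exists_nnreal_btwn.1 ht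
    rw [← ENNReal.ofReal_coe_nnreal] at hs hts
    exact hts.trans_le (le_bowenEntropy ha0 hpos hmono hconv ha1 hsum s.coe_nonneg
      (ENNReal.ofReal_lt_ofReal_iff'.1 hs).1)
end

section
/- Let (X,T) be a dynamical system satisfying the specification property, let (Φ_i)_{i≥1} be a sequence of continuous functions dense in the unit ball of C(X), let (p_i)_{i≥1} be positive numbers with Σ p_i = 1, let μ be a T-invariant Borel probability measure and α = (α_i)_{i≥1} with α_i = ∫ Φ_i dμ. Then Λ_Φ(α) ≥ h_μ, where Λ_Φ(α) is the exponential growth rate of covering numbers of the approximate level sets X_Φ(α,δ,n). -/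
open MeasureTheory Filter Topology Set
open scoped ENNReal NNReal

/-!  General definitions: Bowen topological entropy (via covers by Bowen balls),
measure-theoretic (Kolmogorov–Sinai) entropy, generic points, saturated systems,
and the specification property. -/

variable {X : Type*}

/-- The Birkhoff average `A_n f(x) = (1/n) Σ_{j<n} f(T^j x)` of a real function. -/
noncomputable def birkhoffAvgR {X : Type*} (T : X → X) (f : X → ℝ) (n : ℕ) (x : X) : ℝ :=
  (∑ j ∈ Finset.range n, f (T^[j] x)) / (n : ℝ)

/-- The approximate level set `X_Φ(α,δ,n) = {x : Σ_i p_i |A_nΦ_i(x) - α_i| < δ}`. -/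
def levelSet {X : Type*} (T : X → X) (Φ : ℕ → X → ℝ) (p α : ℕ → ℝ) (δ : ℝ) (n : ℕ) :
    Set X :=
  {x | (∑' i : ℕ, p i * |birkhoffAvgR T (Φ i) n x - α i|) < δ}

/-- `N(S,n,ε)`: the minimal number of Bowen balls `B_n(x,ε)` needed to cover `S`. -/
noncomputable def coverNum {X : Type*} [PseudoMetricSpace X] (T : X → X) (S : Set X)
    (n : ℕ) (ε : ℝ) : ℕ :=
  sInf {m : ℕ | ∃ F : Finset X, F.card = m ∧ S ⊆ ⋃ x ∈ F, bowenBall T x n ε}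

/-- `Λ_Φ(α) = lim_{ε→0} lim_{δ→0} limsup_n (1/n) log N(α,δ,n,ε)`; the limit in `ε` is an
increasing limit (a supremum) and the limit in `δ` is a decreasing limit (an infimum). -/
noncomputable def LambdaPhi {X : Type*} [PseudoMetricSpace X] (T : X → X)
    (Φ : ℕ → X → ℝ) (p α : ℕ → ℝ) : ℝ≥0∞ :=
  ⨆ (ε : ℝ) (_ : 0 < ε), ⨅ (δ : ℝ) (_ : 0 < δ),
    Filter.atTop.limsup fun n : ℕ =>
      ENNReal.ofReal (Real.log (coverNum T (levelSet T Φ p α δ n) n ε) / (n : ℝ))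

/-- The number of words agreeing with `σ` outside at most `d` positions is exponentially small
compared with the number of all words. -/
theorem card_le_of_hamming_le {I A : Type*} [Fintype I] [Fintype A] [DecidableEq A]
    (σ : I → A) (S : Finset (I → A)) (d τ : ℝ) (hτ : 0 ≤ τ)
    (hS : ∀ f ∈ S, ((Finset.univ.filter fun q => f q ≠ σ q).card : ℝ) ≤ d) :
    (S.card : ℝ) ≤
      Real.exp (τ * d) * (1 + Real.exp (-τ) * Fintype.card A) ^ Fintype.card I := by
  classical
  set w : I → A → ℝ := fun q a => if a ≠ σ q then Real.exp (-τ) else 1 with hw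
  have hw0 : ∀ q a, 0 ≤ w q a := fun q a => by
    simp only [hw]; split_ifs <;> positivity
  have hprod : ∀ f : I → A, ∏ q, w q (f q) =
      Real.exp (-τ) ^ (Finset.univ.filter fun q => f q ≠ σ q).card := fun f => by
    simp only [hw]
    rw [Finset.prod_ite]
    simp
  have h1 : (S.card : ℝ) * Real.exp (-(τ * d)) ≤ ∑ f : I → A, ∏ q, w q (f q) := by
    calc (S.card : ℝ) * Real.exp (-(τ * d)) = ∑ f ∈ S, Real.exp (-(τ * d)) := by simp
      _ ≤ ∑ f ∈ S, ∏ q, w q (f q) := by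
        refine Finset.sum_le_sum fun f hf => ?_
        rw [hprod, ← Real.exp_nat_mul]
        have := mul_le_mul_of_nonneg_left (hS f hf) hτ
        exact Real.exp_le_exp.2 (by linarith)
      _ ≤ _ := Finset.sum_le_univ_sum_of_nonneg fun f => Finset.prod_nonneg fun q _ => hw0 _ _
  have h2 : ∑ f : I → A, ∏ q, w q (f q) = ∏ q, ∑ a, w q a := by
    rw [Finset.prod_univ_sum, Fintype.piFinset_univ]
  have h3 : ∀ q, ∑ a, w q a ≤ 1 + Real.exp (-τ) * Fintype.card A := fun q => by
    calc ∑ a, w q a ≤ ∑ a, ((if a = σ q then 1 else 0) + Real.exp (-τ)) := by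
          refine Finset.sum_le_sum fun a _ => ?_
          have := Real.exp_pos (-τ)
          by_cases h : a = σ q
          · simp only [hw, h, ne_eq, not_true_eq_false, if_false, if_true]; linarith
          · simp only [hw, h, ne_eq, not_false_eq_true, if_false, if_true]; linarith
      _ = _ := by
        rw [Finset.sum_add_distrib]
        simp [mul_comm]
  have h4 : ∏ q, ∑ a, w q a ≤ (1 + Real.exp (-τ) * Fintype.card A) ^ Fintype.card I := by
    calc ∏ q, ∑ a, w q a ≤ ∏ _q : I, (1 + Real.exp (-τ) * Fintype.card A) :=
          Finset.prod_le_prod (fun q _ => Finset.sum_nonneg fun a _ => hw0 _ _) fun q _ => h3 q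
      _ = _ := by simp
  rw [Real.exp_neg, h2] at h1
  have h5 := h1.trans h4
  rwa [← div_eq_mul_inv, div_le_iff₀ (Real.exp_pos _), mul_comm] at h5

/-- If the words `ν ω`, `ω ∈ E`, agree at all positions that are good for both points, few
positions are bad, and each word has small probability, then `E` has small probability. -/
theorem measureReal_le_of_agree {Ω I A : Type*} [MeasurableSpace Ω] (ℙ : Measure Ω)
    [IsProbabilityMeasure ℙ] [Fintype I] [Fintype A] (ν : Ω → I → A) (good : Ω → I → Prop)
    [∀ ω, DecidablePred (good ω)] (E : Set Ω) (d τ b : ℝ) (hτ : 0 ≤ τ) (hb : 0 ≤ b)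
    (hagree : ∀ ω ∈ E, ∀ ω' ∈ E, ∀ q, good ω q → good ω' q → ν ω q = ν ω' q)
    (hbad : ∀ ω ∈ E, ((Finset.univ.filter fun q => ¬ good ω q).card : ℝ) ≤ d)
    (hfiber : ∀ ω ∈ E, ℙ.real (ν ⁻¹' {ν ω}) ≤ b) :
    ℙ.real E ≤
      Real.exp (τ * d) * (1 + Real.exp (-τ) * Fintype.card A) ^ Fintype.card I * b := by
  classical
  rcases E.eq_empty_or_nonempty with rfl | ⟨ω₀, hω₀⟩
  · simp only [measureReal_empty]; positivity
  set σ : I → A := fun q =>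
    if h : ∃ ω ∈ E, good ω q then ν h.choose q else ν ω₀ q with hσ
  have hσ' : ∀ ω ∈ E, ∀ q, good ω q → ν ω q = σ q := fun ω hω q hq => by
    have h : ∃ ω ∈ E, good ω q := ⟨ω, hω, hq⟩
    simp only [hσ, dif_pos h]
    exact hagree ω hω _ h.choose_spec.1 q hq h.choose_spec.2
  set S : Finset (I → A) := (Set.toFinite (ν '' E)).toFinset with hSdef
  have hS : ∀ f ∈ S, ∃ ω ∈ E, ν ω = f := fun f hf => by simpa [hSdef] using hf
  have hcard := card_le_of_hamming_le σ S d τ hτ fun f hf => by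
    obtain ⟨ω, hω, rfl⟩ := hS f hf
    refine le_trans ?_ (hbad ω hω)
    exact_mod_cast Finset.card_le_card fun q hq => by
      simp only [Finset.mem_filter, Finset.mem_univ, true_and] at hq ⊢
      exact fun hg => hq (hσ' ω hω q hg)
  calc ℙ.real E ≤ ℙ.real (⋃ f ∈ S, ν ⁻¹' {f}) := by
        refine measureReal_mono (fun ω hω => ?_) (measure_ne_top _ _)
        simp only [hSdef, Set.Finite.mem_toFinset, mem_iUnion, mem_preimage, mem_singleton_iff]
        exact ⟨ν ω, ⟨ω, hω, rfl⟩, rfl⟩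
    _ ≤ ∑ f ∈ S, ℙ.real (ν ⁻¹' {f}) := measureReal_biUnion_finset_le _ _
    _ ≤ ∑ f ∈ S, b := Finset.sum_le_sum fun f hf => by
        obtain ⟨ω, hω, rfl⟩ := hS f hf
        exact hfiber ω hω
    _ = S.card * b := by simp
    _ ≤ _ := by gcongr

/-- The strong law of large numbers on an infinite power of a probability space. -/
theorem ae_tendsto_avg_infinitePi [MeasurableSpace X] (μ : Measure X) [IsProbabilityMeasure μ]
    (f : X → ℝ) (hf : Measurable f) (hfi : Integrable f μ) :
    ∀ᵐ ω ∂(Measure.infinitePi fun _ : ℕ => μ),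
      Tendsto (fun k : ℕ => (∑ j ∈ Finset.range k, f (ω j)) / (k : ℝ)) atTop
        (𝓝 (∫ x, f x ∂μ)) := by
  have hmap : ∀ j, (Measure.infinitePi fun _ : ℕ => μ).map (fun ω => ω j) = μ := fun j =>
    Measure.infinitePi_map_eval (fun _ : ℕ => μ) j
  have hmp : ∀ j, MeasurePreserving (fun ω : ℕ → X => ω j)
    (Measure.infinitePi fun _ : ℕ => μ) μ := fun j => ⟨measurable_pi_apply j, hmap j⟩
  have hint : ∫ ω, f (ω 0) ∂(Measure.infinitePi fun _ : ℕ => μ) = ∫ x, f x ∂μ := by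
    have h := integral_map (μ := Measure.infinitePi fun _ : ℕ => μ)
      (measurable_pi_apply (0 : ℕ)).aemeasurable (f := f) hf.aestronglyMeasurable
    rw [hmap 0] at h
    exact h.symm
  have hident : ∀ j, ProbabilityTheory.IdentDistrib (fun ω : ℕ → X => f (ω j))
      (fun ω : ℕ → X => f (ω 0)) (Measure.infinitePi fun _ : ℕ => μ)
      (Measure.infinitePi fun _ : ℕ => μ) := fun j => by
    refine ⟨(hf.comp (measurable_pi_apply j)).aemeasurable,
      (hf.comp (measurable_pi_apply 0)).aemeasurable, ?_⟩
    have h : ∀ i, Measure.map (fun ω : ℕ → X => f (ω i)) (Measure.infinitePi fun _ : ℕ => μ) =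
        μ.map f := fun i => by
      conv_rhs => rw [← hmap i, Measure.map_map hf (measurable_pi_apply i)]
      rfl
    rw [h j, h 0]
  have hindep : Pairwise fun i j => ProbabilityTheory.IndepFun (fun ω : ℕ → X => f (ω i))
      (fun ω : ℕ → X => f (ω j)) (Measure.infinitePi fun _ : ℕ => μ) := fun i j hij =>
    (ProbabilityTheory.iIndepFun_infinitePi (P := fun _ : ℕ => μ) (X := fun _ => f)
      (fun _ => hf)).indepFun hij
  have hfi0 : Integrable (fun ω : ℕ → X => f (ω 0)) (Measure.infinitePi fun _ : ℕ => μ) :=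
    (hmp 0).integrable_comp_of_integrable hfi
  have h := ProbabilityTheory.strong_law_ae_real (fun (j : ℕ) (ω : ℕ → X) => f (ω j))
    hfi0 hindep hident
  rwa [hint] at h

/-- A property holding almost surely from some time on holds with probability at least `1/2`
at all large times. -/
theorem eventually_half_le_measureReal {Ω : Type*} [MeasurableSpace Ω] (ℙ : Measure Ω)
    [IsProbabilityMeasure ℙ] (E : ℕ → Set Ω) (h : ∀ᵐ ω ∂ℙ, ∀ᶠ k in atTop, ω ∈ E k) :
    ∀ᶠ k in atTop, 1 / 2 ≤ ℙ.real (E k) := by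
  set F : ℕ → Set Ω := fun K => {ω | ∀ k ≥ K, ω ∈ E k} with hF
  have hmono : Monotone F := fun a b hab ω hω k hk => hω k (hab.trans hk)
  have h1 := tendsto_measure_iUnion_atTop (μ := ℙ) hmono
  have h2 : ℙ (⋃ K, F K) = 1 := by
    rw [← measure_univ (μ := ℙ)]
    refine measure_congr ?_
    filter_upwards [h] with ω hω
    obtain ⟨K, hK⟩ := eventually_atTop.1 hω
    exact propext ⟨fun _ => trivial, fun _ => mem_iUnion.2 ⟨K, hK⟩⟩
  rw [h2] at h1
  have h3 : ∀ᶠ k in atTop, (1 / 2 : ℝ≥0∞) < ℙ (F k) :=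
    h1.eventually (lt_mem_nhds (by simp))
  filter_upwards [h3] with k hk
  have h4 : (1 / 2 : ℝ≥0∞) ≤ ℙ (E k) := hk.le.trans (measure_mono fun ω hω => hω k le_rfl)
  have := ENNReal.toReal_mono (measure_ne_top ℙ _) h4
  simpa [Measure.real] using this

/-- A finite measurable partition is uniformly continuous on a closed set of almost full
measure. -/
theorem exists_isClosed_forall_dist_lt [MetricSpace X] [CompactSpace X]
    [MeasurableSpace X] [BorelSpace X] (μ : Measure X) [IsProbabilityMeasure μ] {r : ℕ}
    (P : X → Fin r) (hP : Measurable P) (γ : ℝ) (hγ : 0 < γ) :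
    ∃ K : Set X, IsClosed K ∧ μ.real Kᶜ < γ ∧
      ∃ ε : ℝ, 0 < ε ∧ ∀ x ∈ K, ∀ y ∈ K, dist x y < ε → P x = P y := by
  have hr : 0 < (r : ℝ) ∨ r = 0 := by
    rcases Nat.eq_zero_or_pos r with h | h
    · exact Or.inr h
    · exact Or.inl (by exact_mod_cast h)
  rcases hr with hr | rfl
  swap
  · have : IsEmpty X := ⟨fun x => (P x).elim0⟩
    refine ⟨∅, isClosed_empty, ?_, 1, one_pos, by simp⟩
    have : (∅ᶜ : Set X) = ∅ := Set.eq_empty_of_isEmpty _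
    simpa [this] using hγ
  have hmeas : ∀ a, MeasurableSet (P ⁻¹' {a}) := fun a => hP (measurableSet_singleton a)
  have hK : ∀ a, ∃ F ⊆ P ⁻¹' {a}, IsClosed F ∧ μ (P ⁻¹' {a} \ F) < ENNReal.ofReal (γ / r) :=
    fun a => (hmeas a).exists_isClosed_sdiff_lt (measure_ne_top _ _)
      (by simpa using div_pos hγ hr)
  choose F hFs hFc hFm using hK
  refine ⟨⋃ a, F a, isClosed_iUnion_of_finite hFc, ?_, ?_⟩
  · have hsub : (⋃ a, F a)ᶜ ⊆ ⋃ a ∈ (Finset.univ : Finset (Fin r)), P ⁻¹' {a} \ F a := by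
      intro x hx
      simp only [mem_compl_iff, mem_iUnion, not_exists] at hx
      simpa using hx (P x)
    have hlt : ∀ a, μ.real (P ⁻¹' {a} \ F a) < γ / r := fun a => by
      have := (ENNReal.toReal_lt_toReal (measure_ne_top _ _) (by simp)).2 (hFm a)
      rwa [ENNReal.toReal_ofReal (div_pos hγ hr).le] at this
    have : Nonempty (Fin r) := ⟨⟨0, by exact_mod_cast hr⟩⟩
    calc μ.real (⋃ a, F a)ᶜ ≤ _ := measureReal_mono hsub (measure_ne_top _ _)
      _ ≤ ∑ a : Fin r, μ.real (P ⁻¹' {a} \ F a) := measureReal_biUnion_finset_le _ _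
      _ < ∑ _a : Fin r, γ / r :=
        Finset.sum_lt_sum_of_nonempty Finset.univ_nonempty fun a _ => hlt a
      _ = γ := by simp; field_simp
  · have hsep : ∀ q : Fin r × Fin r, ∃ e : ℝ, 0 < e ∧
        (q.1 ≠ q.2 → ∀ x ∈ F q.1, ∀ y ∈ F q.2, e ≤ dist x y) := by
      rintro ⟨a, b⟩
      by_cases hab : a = b
      · exact ⟨1, one_pos, fun h => (h hab).elim⟩
      · have hd : Disjoint (F a) (F b) := Set.disjoint_left.2 fun x hxa hxb =>
          hab ((hFs a hxa).symm.trans (hFs b hxb))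
        obtain ⟨e, he, h⟩ := Metric.exists_pos_forall_lt_edist (hFc a).isCompact (hFc b) hd
        refine ⟨e, by exact_mod_cast he, fun _ x hx y hy => ?_⟩
        have := (h x hx y hy).le
        rw [edist_dist, ← ENNReal.ofReal_coe_nnreal] at this
        exact (ENNReal.ofReal_le_ofReal_iff dist_nonneg).1 this
    choose e he hsep using hsep
    have : Nonempty (Fin r × Fin r) := ⟨⟨⟨0, by exact_mod_cast hr⟩, ⟨0, by exact_mod_cast hr⟩⟩⟩
    obtain ⟨q₀, hq₀⟩ := Finite.exists_min e
    refine ⟨e q₀, he q₀, fun x hx y hy hxy => ?_⟩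
    obtain ⟨a, ha⟩ := mem_iUnion.1 hx
    obtain ⟨b, hb⟩ := mem_iUnion.1 hy
    by_contra hne
    have hxa : P x = a := hFs a ha
    have hyb : P y = b := hFs b hb
    have h1 := hsep (a, b) (by rw [← hxa, ← hyb]; exact hne) x ha y hb
    linarith [hq₀ (a, b)]

/-- The `n`-itinerary of a point with respect to a finite partition `P`. -/
def itinerary (T : X → X) {r : ℕ} (P : X → Fin r) (n : ℕ) (x : X) : Fin n → Fin r :=
  fun s => P (T^[s] x)

/-- The information function of the `n`-th refinement of a finite partition. -/
noncomputable def infoFn [MeasurableSpace X] (T : X → X) (μ : Measure X) {r : ℕ}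
    (P : X → Fin r) (n : ℕ) (x : X) : ℝ :=
  -Real.log (μ.real (itinerary T P n ⁻¹' {itinerary T P n x}))

theorem measurable_itinerary [MeasurableSpace X] {T : X → X} (hT : Measurable T) {r : ℕ}
    {P : X → Fin r} (hP : Measurable P) (n : ℕ) : Measurable (itinerary T P n) :=
  measurable_pi_lambda _ fun s => hP.comp (hT.iterate s)

theorem integrable_comp_itinerary [MeasurableSpace X] (μ : Measure X) [IsFiniteMeasure μ]
    {T : X → X} (hT : Measurable T) {r : ℕ} {P : X → Fin r} (hP : Measurable P) (n : ℕ)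
    (g : (Fin n → Fin r) → ℝ) : Integrable (fun x => g (itinerary T P n x)) μ := by
  have hi : Integrable g (μ.map (itinerary T P n)) := Integrable.of_finite
  exact hi.comp_measurable (measurable_itinerary hT hP n)

theorem partInfo_le_integral_infoFn [MeasurableSpace X] (μ : Measure X) [IsProbabilityMeasure μ]
    {T : X → X} (hT : Measurable T) {r : ℕ} {P : X → Fin r} (hP : Measurable P) (n : ℕ) :
    partInfo T μ (fun x => (P x : ℕ)) n ≤ ENNReal.ofReal (∫ x, infoFn T μ P n x ∂μ) := by
  classical
  have hmeas := measurable_itinerary hT hP n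
  set g : (Fin n → Fin r) → ℝ := fun f => μ.real (itinerary T P n ⁻¹' {f}) with hg
  have hint : ∫ x, infoFn T μ P n x ∂μ = ∑ f, Real.negMulLog (g f) := by
    have h := integral_map (μ := μ) hmeas.aemeasurable
      (f := fun f => -Real.log (g f)) (measurable_of_finite _).aestronglyMeasurable
    rw [show (∫ x, infoFn T μ P n x ∂μ) =
      ∫ x, (fun f => -Real.log (g f)) (itinerary T P n x) ∂μ from rfl, ← h,
      integral_fintype Integrable.of_finite]
    refine Finset.sum_congr rfl fun f _ => ?_
    rw [map_measureReal_apply hmeas (measurableSet_singleton f)]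
    simp [Real.negMulLog, hg]
  set e : (Fin n → Fin r) → List ℕ := fun f => List.ofFn fun s => (f s : ℕ) with he
  have heinj : Function.Injective e := fun f f' h => by
    have := List.ofFn_injective h
    funext s
    exact Fin.ext (congrFun this s)
  have hname : (fun x => (List.range n).map fun j => ((P (T^[j] x) : Fin r) : ℕ)) =
      e ∘ itinerary T P n := by
    funext x
    refine List.ext_getElem (by simp [he]) fun i h1 h2 => ?_
    simp [he, itinerary]
  have hterm : ∀ l ∉ (Finset.univ.image e),
      ENNReal.ofReal (Real.negMulLog ((μ ((e ∘ itinerary T P n) ⁻¹' {l})).toReal)) = 0 := by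
    intro l hl
    have : (e ∘ itinerary T P n) ⁻¹' {l} = ∅ := by
      refine Set.eq_empty_of_forall_notMem fun x hx => hl ?_
      exact Finset.mem_image.2 ⟨itinerary T P n x, Finset.mem_univ _, hx⟩
    simp [this]
  have hnn : ∀ f ∈ (Finset.univ : Finset (Fin n → Fin r)), 0 ≤ Real.negMulLog (g f) :=
    fun f _ => Real.negMulLog_nonneg measureReal_nonneg measureReal_le_one
  rw [partInfo, hname, tsum_eq_sum hterm, Finset.sum_image heinj.injOn, hint,
    ENNReal.ofReal_sum_of_nonneg hnn]
  refine Finset.sum_le_sum fun f _ => ?_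
  have : (e ∘ itinerary T P n) ⁻¹' {e f} = itinerary T P n ⁻¹' {f} := by
    ext x
    simp [heinj.eq_iff]
  rw [this]
  exact le_rfl

/-- Almost every point has an itinerary of positive probability. -/
theorem ae_pos_itinerary [MeasurableSpace X] (μ : Measure X) [IsProbabilityMeasure μ]
    {T : X → X} {r : ℕ} (P : X → Fin r) (n : ℕ) :
    ∀ᵐ x ∂μ, 0 < μ.real (itinerary T P n ⁻¹' {itinerary T P n x}) := by
  have h : ∀ f : Fin n → Fin r, ∀ᵐ x ∂μ, itinerary T P n x = f →
      0 < μ.real (itinerary T P n ⁻¹' {f}) := by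
    intro f
    by_cases hf : μ (itinerary T P n ⁻¹' {f}) = 0
    · have : ∀ᵐ x ∂μ, x ∉ itinerary T P n ⁻¹' {f} := measure_eq_zero_iff_ae_notMem.1 hf
      filter_upwards [this] with x hx hxf
      exact (hx hxf).elim
    · exact Eventually.of_forall fun x _ => ENNReal.toReal_pos hf (measure_ne_top _ _)
  filter_upwards [ae_all_iff.2 h] with x hx
  exact hx _ rfl

/-- A minimal cover by Bowen balls exists in a compact system. -/
theorem exists_finset_card_eq_coverNum [MetricSpace X] [CompactSpace X] {T : X → X}
    (hT : Continuous T) (S : Set X) (n : ℕ) {ε : ℝ} (hε : 0 < ε) :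
    ∃ F : Finset X, F.card = coverNum T S n ε ∧ S ⊆ ⋃ x ∈ F, bowenBall T x n ε := by
  have hopen : ∀ x, bowenBall T x n ε ∈ 𝓝 x := fun x => by
    refine IsOpen.mem_nhds ?_ fun j _ => by simpa using hε
    have : bowenBall T x n ε = ⋂ j ∈ Finset.range n, {y | dist (T^[j] x) (T^[j] y) < ε} := by
      ext y
      simp [bowenBall]
    rw [this]
    exact isOpen_biInter_finset fun j _ =>
      isOpen_lt (continuous_const.dist (hT.iterate j)) continuous_const
  obtain ⟨F, -, hF⟩ := isCompact_univ.elim_nhds_subcover (fun x => bowenBall T x n ε)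
    fun x _ => hopen x
  exact Nat.sInf_mem (s := {m : ℕ | ∃ F : Finset X, F.card = m ∧ S ⊆ ⋃ x ∈ F, bowenBall T x n ε})
    ⟨F.card, F, rfl, (subset_univ S).trans hF⟩

/-- In a system with specification, arbitrary orbit segments of length `n` can be shadowed
along blocks of length `n + m`. -/
theorem SpecificationProperty.exists_shadow [PseudoMetricSpace X] {T : X → X}
    (h : SpecificationProperty T) {ε : ℝ} (hε : 0 < ε) :
    ∃ m : ℕ, ∀ k ≥ 2, ∀ n ≥ 1, ∀ x : ℕ → X, ∃ y, ∀ j < k, ∀ s < n,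
      dist (T^[j * (n + m) + s] y) (T^[s] (x j)) < ε := by
  obtain ⟨m, -, hm⟩ := h ε hε
  refine ⟨m, fun k hk n hn x => ?_⟩
  obtain ⟨y, hy⟩ := hm k hk x (fun j => j * (n + m)) (fun j => j * (n + m) + (n - 1))
    (fun j _ => Nat.le_add_right _ _) (fun j _ => by
      simp only [add_mul, one_mul]
      omega)
  exact ⟨y, fun j hj s hs => hy j hj s (by omega)⟩

/-- A set of block sequences whose shadowing points lie in `S` has probability bounded in terms
of the covering number of `S`. -/
theorem measureReal_le_coverNum_mul [MetricSpace X] [CompactSpace X]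
    [MeasurableSpace X] [BorelSpace X] {T : X → X} (hT : Continuous T) (μ : Measure X)
    [IsProbabilityMeasure μ] {r : ℕ} {P : X → Fin r} (hP : Measurable P) (K : Set X)
    {ε ε' : ℝ} (hε : 0 < ε) (hεε' : ε' ≤ ε)
    (hK : ∀ x ∈ K, ∀ y ∈ K, dist x y < 4 * ε → P x = P y)
    (k n m : ℕ) (S : Set X) (E : Set (ℕ → X)) (d τ h : ℝ) (hτ : 0 ≤ τ)
    (hshadow : ∀ ω ∈ E, ∃ y ∈ S, ∀ j < k, ∀ s < n,
      dist (T^[j * (n + m) + s] y) (T^[s] (ω j)) < ε')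
    (hbad : ∀ ω ∈ E, ∑ j ∈ Finset.range k, ∑ s ∈ Finset.range n,
      Kᶜ.indicator (fun _ => (1 : ℝ)) (T^[s] (ω j)) ≤ d)
    (hinfo : ∀ ω ∈ E, h ≤ ∑ j ∈ Finset.range k, infoFn T μ P n (ω j))
    (hpos : ∀ ω ∈ E, ∀ j, 0 < μ.real (itinerary T P n ⁻¹' {itinerary T P n (ω j)})) :
    (Measure.infinitePi fun _ : ℕ => μ).real E ≤
      coverNum T S (k * (n + m)) ε *
        (Real.exp (τ * d) * (1 + Real.exp (-τ) * r) ^ (k * n) * Real.exp (-h)) := by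
  classical
  set ℙ := Measure.infinitePi fun _ : ℕ => μ with hℙ
  obtain ⟨F, hFcard, hFcov⟩ := exists_finset_card_eq_coverNum hT S (k * (n + m)) hε
  set ν : (ℕ → X) → (Fin k × Fin n → Fin r) := fun ω q => P (T^[q.2] (ω q.1)) with hν
  set Ez : X → Set (ℕ → X) := fun z => {ω ∈ E | ∃ y ∈ bowenBall T z (k * (n + m)) ε,
    ∀ j < k, ∀ s < n, dist (T^[j * (n + m) + s] y) (T^[s] (ω j)) < ε'} with hEz
  have hone : ∀ z, ℙ.real (Ez z) ≤
      Real.exp (τ * d) * (1 + Real.exp (-τ) * r) ^ (k * n) * Real.exp (-h) := by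
    intro z
    have := measureReal_le_of_agree ℙ ν (fun ω q => T^[q.2] (ω q.1) ∈ K) (Ez z) d τ
      (Real.exp (-h)) hτ (Real.exp_pos _).le ?_ ?_ ?_
    · simpa using this
    · rintro ω ⟨-, y, hyz, hy⟩ ω' ⟨-, y', hyz', hy'⟩ ⟨j, s⟩ hg hg'
      refine hK _ hg _ hg' ?_
      have hlt : (j : ℕ) * (n + m) + s < k * (n + m) := by
        have h1 : ((j : ℕ) + 1) * (n + m) ≤ k * (n + m) := Nat.mul_le_mul_right _ j.2
        have h2 := s.2
        rw [add_mul, one_mul] at h1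
        omega
      have h1 := hyz _ hlt
      have h2 := hyz' _ hlt
      have h3 := hy j j.2 s s.2
      have h4 := hy' j j.2 s s.2
      have t1 := dist_triangle (T^[s] (ω j)) (T^[(j : ℕ) * (n + m) + s] y) (T^[s] (ω' j))
      have t2 := dist_triangle (T^[(j : ℕ) * (n + m) + s] y) (T^[(j : ℕ) * (n + m) + s] z)
        (T^[s] (ω' j))
      have t3 := dist_triangle (T^[(j : ℕ) * (n + m) + s] z) (T^[(j : ℕ) * (n + m) + s] y')
        (T^[s] (ω' j))
      rw [dist_comm] at h1 h3
      rw [dist_comm] at h1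
      rw [dist_comm (T^[(j : ℕ) * (n + m) + s] y) (T^[(j : ℕ) * (n + m) + s] z)] at t2
      linarith
    · rintro ω ⟨hω, -⟩
      refine le_trans (le_of_eq ?_) (hbad ω hω)
      rw [Finset.card_filter, Fintype.sum_prod_type, Nat.cast_sum, ← Fin.sum_univ_eq_sum_range
        (fun j => ∑ s ∈ Finset.range n, Kᶜ.indicator (fun _ => (1 : ℝ)) (T^[s] (ω j)))]
      refine Finset.sum_congr rfl fun j _ => ?_
      rw [Nat.cast_sum, ← Fin.sum_univ_eq_sum_range
        (fun s => Kᶜ.indicator (fun _ => (1 : ℝ)) (T^[s] (ω j)))]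
      refine Finset.sum_congr rfl fun s _ => ?_
      by_cases hs : T^[s] (ω j) ∈ K <;> simp [hs]
    · rintro ω ⟨hω, -⟩
      have hsub : ν ⁻¹' {ν ω} ⊆ Set.pi (Finset.range k : Set ℕ)
          (fun j => itinerary T P n ⁻¹' {itinerary T P n (ω j)}) := by
        intro ω' hω' j hj
        have hj' : j < k := by simpa using hj
        funext s
        exact congrFun hω' (⟨j, hj'⟩, s)
      refine (measureReal_mono hsub (measure_ne_top _ _)).trans ?_
      rw [Measure.real, hℙ, Measure.infinitePi_pi (fun _ : ℕ => μ) fun j _ =>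
        measurable_itinerary hT.measurable hP n (measurableSet_singleton _), ENNReal.toReal_prod]
      have : ∀ j ∈ Finset.range k, (μ (itinerary T P n ⁻¹' {itinerary T P n (ω j)})).toReal =
          Real.exp (-infoFn T μ P n (ω j)) := fun j _ => by
        rw [infoFn, neg_neg, Real.exp_log (hpos ω hω j)]
        rfl
      rw [Finset.prod_congr rfl this, ← Real.exp_sum, Finset.sum_neg_distrib]
      exact Real.exp_le_exp.2 (neg_le_neg (hinfo ω hω))
  calc ℙ.real E ≤ ℙ.real (⋃ z ∈ F, Ez z) := by
        refine measureReal_mono (fun ω hω => ?_) (measure_ne_top _ _)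
        obtain ⟨y, hyS, hy⟩ := hshadow ω hω
        obtain ⟨z, hz⟩ := mem_iUnion.1 (hFcov hyS)
        obtain ⟨hzF, hyz⟩ := mem_iUnion.1 hz
        exact mem_biUnion hzF ⟨hω, y, hyz, hy⟩
    _ ≤ ∑ z ∈ F, ℙ.real (Ez z) := measureReal_biUnion_finset_le _ _
    _ ≤ ∑ z ∈ F, (Real.exp (τ * d) * (1 + Real.exp (-τ) * r) ^ (k * n) * Real.exp (-h)) :=
      Finset.sum_le_sum fun z _ => hone z
    _ = _ := by rw [Finset.sum_const, hFcard, nsmul_eq_mul]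

theorem abs_birkhoffAvgR_le_one {T : X → X} {f : X → ℝ} (hf : ∀ x, |f x| ≤ 1) (n : ℕ) (x : X) :
    |birkhoffAvgR T f n x| ≤ 1 := by
  rw [birkhoffAvgR, abs_div, Nat.abs_cast]
  refine div_le_one_of_le₀ ?_ (Nat.cast_nonneg n)
  calc |∑ j ∈ Finset.range n, f (T^[j] x)| ≤ ∑ j ∈ Finset.range n, |f (T^[j] x)| :=
        Finset.abs_sum_le_sum_abs _ _
    _ ≤ ∑ _j ∈ Finset.range n, (1 : ℝ) := Finset.sum_le_sum fun j _ => hf _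
    _ = n := by simp

theorem abs_avg_le_one {u : ℕ → ℝ} (hu : ∀ j, |u j| ≤ 1) (k : ℕ) :
    |(∑ j ∈ Finset.range k, u j) / (k : ℝ)| ≤ 1 := by
  rw [abs_div, Nat.abs_cast]
  refine div_le_one_of_le₀ ?_ (Nat.cast_nonneg k)
  calc |∑ j ∈ Finset.range k, u j| ≤ ∑ j ∈ Finset.range k, |u j| :=
        Finset.abs_sum_le_sum_abs _ _
    _ ≤ ∑ _j ∈ Finset.range k, (1 : ℝ) := Finset.sum_le_sum fun j _ => hu _
    _ = k := by simp

theorem abs_sub_le_two {a b : ℝ} (ha : |a| ≤ 1) (hb : |b| ≤ 1) : |a - b| ≤ 2 := by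
  linarith [abs_sub a b]

theorem summable_mul_abs_sub {p : ℕ → ℝ} (hp : ∀ i, 0 < p i) (hps : Summable p) {u v : ℕ → ℝ}
    (hu : ∀ i, |u i| ≤ 1) (hv : ∀ i, |v i| ≤ 1) : Summable fun i => p i * |u i - v i| :=
  Summable.of_nonneg_of_le (fun i => mul_nonneg (hp i).le (abs_nonneg _))
    (fun i => mul_le_mul_of_nonneg_left (abs_sub_le_two (hu i) (hv i)) (hp i).le)
    (hps.mul_right 2)

/-- Uniform continuity of the pseudometric `∑ p i * |Φ i x - Φ i y|`. -/
theorem exists_forall_tsum_lt [MetricSpace X] [CompactSpace X] {Φ : ℕ → X → ℝ}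
    (hΦc : ∀ i, Continuous (Φ i)) (hΦb : ∀ i x, |Φ i x| ≤ 1) {p : ℕ → ℝ} (hp : ∀ i, 0 < p i)
    (hps : Summable p) {η : ℝ} (hη : 0 < η) :
    ∃ e > 0, ∀ x y, dist x y < e → ∑' i, p i * |Φ i x - Φ i y| < η := by
  have hcont : Continuous fun z : X × X => ∑' i, p i * |Φ i z.1 - Φ i z.2| := by
    refine continuous_tsum (fun i => ?_) (hps.mul_right 2) fun i z => ?_
    · exact continuous_const.mul
        (((hΦc i).comp continuous_fst).sub ((hΦc i).comp continuous_snd)).abs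
    · rw [Real.norm_eq_abs, abs_of_nonneg (mul_nonneg (hp i).le (abs_nonneg _))]
      exact mul_le_mul_of_nonneg_left (abs_sub_le_two (hΦb i _) (hΦb i _)) (hp i).le
  obtain ⟨e, he, h⟩ := Metric.uniformContinuous_iff.1
    (CompactSpace.uniformContinuous_of_continuous hcont) η hη
  refine ⟨e, he, fun x y hxy => ?_⟩
  have h1 := h (a := (x, y)) (b := (x, x)) (by
    rw [Prod.dist_eq]
    simpa [dist_comm y x] using hxy)
  rw [Real.dist_eq] at h1
  simp only [sub_self, abs_zero, mul_zero, tsum_zero, sub_zero] at h1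
  exact lt_of_abs_lt h1

theorem sum_range_mul (f : ℕ → ℝ) (k L : ℕ) :
    ∑ t ∈ Finset.range (k * L), f t =
      ∑ j ∈ Finset.range k, ∑ s ∈ Finset.range L, f (j * L + s) := by
  induction k with
  | zero => simp
  | succ k ih => rw [add_mul, one_mul, Finset.sum_range_add, Finset.sum_range_succ, ih]

/-- The Birkhoff averages of a point shadowing a sequence of orbit segments are close to the
mean of the Birkhoff averages along the segments. -/
theorem tsum_birkhoffAvgR_sub_le {T : X → X} {Φ : ℕ → X → ℝ}
    (hΦb : ∀ i x, |Φ i x| ≤ 1) {p : ℕ → ℝ} (hp : ∀ i, 0 < p i) (hps : Summable p)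
    (hp1 : ∑' i, p i = 1) {η : ℝ} (hη : 0 ≤ η) {k n m : ℕ} (hk : 0 < k) (hn : 0 < n) (y : X)
    (ω : ℕ → X) (hy : ∀ j < k, ∀ s < n,
      ∑' i, p i * |Φ i (T^[j * (n + m) + s] y) - Φ i (T^[s] (ω j))| ≤ η) :
    ∑' i, p i * |birkhoffAvgR T (Φ i) (k * (n + m)) y -
      (∑ j ∈ Finset.range k, birkhoffAvgR T (Φ i) (n + m) (ω j)) / (k : ℝ)| ≤
      η + 2 * m / (n + m : ℕ) := by
  set L := n + m with hL
  have hLpos : 0 < (L : ℝ) := by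
    have : 0 < L := by omega
    exact_mod_cast this
  have hkpos : 0 < (k : ℝ) := by exact_mod_cast hk
  set D : ℕ → ℕ → ℕ → ℝ := fun i j s => p i * |Φ i (T^[j * L + s] y) - Φ i (T^[s] (ω j))|
    with hD
  have hDs : ∀ j s, Summable fun i => D i j s := fun j s =>
    summable_mul_abs_sub hp hps (fun i => hΦb i _) (fun i => hΦb i _)
  have hD2 : ∀ j s, ∑' i, D i j s ≤ 2 := fun j s => by
    calc ∑' i, D i j s ≤ ∑' i, p i * 2 := (hDs j s).tsum_le_tsum
          (fun i => mul_le_mul_of_nonneg_left (abs_sub_le_two (hΦb i _) (hΦb i _)) (hp i).le)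
          (hps.mul_right 2)
      _ = 2 := by rw [tsum_mul_right, hp1, one_mul]
  have hterm : ∀ i, p i * |birkhoffAvgR T (Φ i) (k * L) y -
      (∑ j ∈ Finset.range k, birkhoffAvgR T (Φ i) L (ω j)) / (k : ℝ)| ≤
      (∑ j ∈ Finset.range k, ∑ s ∈ Finset.range L, D i j s) / (k * L) := fun i => by
    have : birkhoffAvgR T (Φ i) (k * L) y -
        (∑ j ∈ Finset.range k, birkhoffAvgR T (Φ i) L (ω j)) / (k : ℝ) =
        (∑ j ∈ Finset.range k, ∑ s ∈ Finset.range L,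
          (Φ i (T^[j * L + s] y) - Φ i (T^[s] (ω j)))) / (k * L) := by
      simp only [birkhoffAvgR, sum_range_mul, Finset.sum_sub_distrib, ← Finset.sum_div]
      push_cast
      field_simp
    rw [this, abs_div, abs_of_pos (mul_pos hkpos hLpos), ← mul_div_assoc]
    refine div_le_div_of_nonneg_right ?_ (mul_pos hkpos hLpos).le
    simp only [hD, ← Finset.mul_sum]
    refine mul_le_mul_of_nonneg_left ?_ (hp i).le
    exact (Finset.abs_sum_le_sum_abs _ _).trans
      (Finset.sum_le_sum fun j _ => Finset.abs_sum_le_sum_abs _ _)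
  have hsj : ∀ j, Summable fun i => ∑ s ∈ Finset.range L, D i j s := fun j =>
    summable_sum fun s _ => hDs j s
  have hsum : Summable fun i => ∑ j ∈ Finset.range k, ∑ s ∈ Finset.range L, D i j s :=
    summable_sum fun j _ => hsj j
  have hblock : ∀ j < k, ∑ s ∈ Finset.range L, ∑' i, D i j s ≤ L * η + 2 * m := fun j hj => by
    rw [hL, Finset.sum_range_add]
    have h1 : ∑ s ∈ Finset.range n, ∑' i, D i j s ≤ ∑ _s ∈ Finset.range n, η :=
      Finset.sum_le_sum fun s hs => hy j hj s (Finset.mem_range.1 hs)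
    have h2 : ∑ s ∈ Finset.range m, ∑' i, D i j (n + s) ≤ ∑ _s ∈ Finset.range m, (2 : ℝ) :=
      Finset.sum_le_sum fun s _ => hD2 j _
    simp only [Finset.sum_const, Finset.card_range, nsmul_eq_mul] at h1 h2
    push_cast
    nlinarith [mul_nonneg (Nat.cast_nonneg (α := ℝ) m) hη]
  calc _ ≤ ∑' i, (∑ j ∈ Finset.range k, ∑ s ∈ Finset.range L, D i j s) / (k * L) :=
        Summable.tsum_le_tsum hterm
          (summable_mul_abs_sub hp hps (fun i => abs_birkhoffAvgR_le_one (hΦb i) _ _)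
            (fun i => abs_avg_le_one (fun j => abs_birkhoffAvgR_le_one (hΦb i) _ _) _))
          (hsum.div_const _)
    _ = (∑ j ∈ Finset.range k, ∑ s ∈ Finset.range L, ∑' i, D i j s) / (k * L) := by
        rw [tsum_div_const, Summable.tsum_finsetSum fun j _ => hsj j]
        congr 1
        exact Finset.sum_congr rfl fun j _ => Summable.tsum_finsetSum fun s _ => hDs j s
    _ ≤ (∑ _j ∈ Finset.range k, (L * η + 2 * m)) / (k * L) := by
        refine div_le_div_of_nonneg_right ?_ (mul_pos hkpos hLpos).le
        exact Finset.sum_le_sum fun j hj => hblock j (Finset.mem_range.1 hj)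
    _ = η + 2 * m / L := by
        simp only [Finset.sum_const, Finset.card_range, nsmul_eq_mul]
        field_simp

theorem integral_comp_iterate [MeasurableSpace X] {μ : Measure X} {T : X → X}
    (hinv : MeasurePreserving T μ μ) {f : X → ℝ} (hf : Measurable f) (s : ℕ) :
    ∫ x, f (T^[s] x) ∂μ = ∫ x, f x ∂μ := by
  have h := integral_map (μ := μ) (hinv.iterate s).measurable.aemeasurable
    (f := f) hf.aestronglyMeasurable
  rw [(hinv.iterate s).map_eq] at h
  exact h.symm

theorem integral_sum_comp_iterate [MeasurableSpace X] {μ : Measure X} {T : X → X}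
    (hinv : MeasurePreserving T μ μ) {f : X → ℝ} (hf : Measurable f) (hfi : Integrable f μ)
    (n : ℕ) : ∫ x, ∑ s ∈ Finset.range n, f (T^[s] x) ∂μ = n * ∫ x, f x ∂μ := by
  have h : ∀ s ∈ Finset.range n, Integrable (fun x => f (T^[s] x)) μ := fun s _ =>
    (hinv.iterate s).integrable_comp_of_integrable hfi
  rw [integral_finsetSum _ h]
  simp [integral_comp_iterate hinv hf]

/-- Almost surely, the mean of Birkhoff averages along independent orbit segments converges,
in the weighted `ℓ¹` sense, to the space averages. -/
theorem ae_tendsto_tsum_avg_sub [MeasurableSpace X] (μ : Measure X)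
    [IsProbabilityMeasure μ] {T : X → X} (hinv : MeasurePreserving T μ μ) {Φ : ℕ → X → ℝ}
    (hΦm : ∀ i, Measurable (Φ i)) (hΦb : ∀ i x, |Φ i x| ≤ 1) {p : ℕ → ℝ} (hp : ∀ i, 0 < p i)
    (hps : Summable p) {L : ℕ} (hL : 0 < L) :
    ∀ᵐ ω ∂(Measure.infinitePi fun _ : ℕ => μ),
      Tendsto (fun k : ℕ => ∑' i, p i * |(∑ j ∈ Finset.range k,
        birkhoffAvgR T (Φ i) L (ω j)) / (k : ℝ) - ∫ x, Φ i x ∂μ|) atTop (𝓝 0) := by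
  have hΦi : ∀ i, Integrable (Φ i) μ := fun i =>
    Integrable.of_bound (hΦm i).aestronglyMeasurable 1 (Eventually.of_forall (hΦb i))
  have hBm : ∀ i, Measurable (birkhoffAvgR T (Φ i) L) := fun i =>
    (Finset.measurable_sum _ fun s _ => (hΦm i).comp (hinv.iterate s).measurable).div_const _
  have hBi : ∀ i, Integrable (birkhoffAvgR T (Φ i) L) μ := fun i =>
    Integrable.of_bound (hBm i).aestronglyMeasurable 1
      (Eventually.of_forall (abs_birkhoffAvgR_le_one (hΦb i) L))
  have hLpos : (L : ℝ) ≠ 0 := by exact_mod_cast hL.ne'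
  have hBint : ∀ i, ∫ x, birkhoffAvgR T (Φ i) L x ∂μ = ∫ x, Φ i x ∂μ := fun i => by
    simp only [birkhoffAvgR]
    rw [integral_div, integral_sum_comp_iterate hinv (hΦm i) (hΦi i)]
    field_simp
  filter_upwards [ae_all_iff.2 fun i => ae_tendsto_avg_infinitePi μ _ (hBm i) (hBi i)] with ω hω
  have hα : ∀ i, |∫ x, Φ i x ∂μ| ≤ 1 := fun i => by
    have := norm_integral_le_of_norm_le_const (μ := μ) (f := Φ i) (C := 1)
      (Eventually.of_forall (hΦb i))
    simpa using this
  have h0 : (0 : ℝ) = ∑' _i : ℕ, (0 : ℝ) := by simp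
  rw [h0]
  refine tendsto_tsum_of_dominated_convergence (bound := fun i => p i * 2) (hps.mul_right 2) ?_ ?_
  · intro i
    have h1 := hω i
    rw [hBint i] at h1
    have h2 := ((h1.sub_const (∫ x, Φ i x ∂μ)).abs).const_mul (p i)
    simpa using h2
  · refine Eventually.of_forall fun k i => ?_
    rw [Real.norm_eq_abs, abs_of_nonneg (mul_nonneg (hp i).le (abs_nonneg _))]
    exact mul_le_mul_of_nonneg_left (abs_sub_le_two
      (abs_avg_le_one (fun j => abs_birkhoffAvgR_le_one (hΦb i) _ _) _) (hα i)) (hp i).le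

/-- For all long enough blocks, the covering numbers of the approximate level sets along multiples
of the block length grow at a rate almost as large as the entropy of a finite partition. -/
theorem eventually_le_log_coverNum [MetricSpace X] [CompactSpace X]
    [MeasurableSpace X] [BorelSpace X] {T : X → X} (hT : Continuous T) {Φ : ℕ → X → ℝ}
    (hΦc : ∀ i, Continuous (Φ i)) (hΦb : ∀ i x, |Φ i x| ≤ 1) {p : ℕ → ℝ} (hp : ∀ i, 0 < p i)
    (hps : Summable p) (hp1 : ∑' i, p i = 1) (μ : Measure X) [IsProbabilityMeasure μ]
    (hinv : MeasurePreserving T μ μ) {r : ℕ} {P : X → Fin r} (hP : Measurable P) {K : Set X}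
    (hKc : IsClosed K) {ε ε' δ γ τ c η : ℝ} (hε : 0 < ε) (hεε' : ε' ≤ ε)
    (hK : ∀ x ∈ K, ∀ y ∈ K, dist x y < 4 * ε → P x = P y) (hKγ : μ.real Kᶜ < γ)
    (hτ : 0 ≤ τ) (hη : 0 < η) (hτr : Real.exp (-τ) * r ≤ η) (hτγ : τ * γ ≤ η) (hδ : 0 < δ)
    (hε'D : ∀ x y, dist x y < ε' → ∑' i, p i * |Φ i x - Φ i y| < δ / 4)
    {n m : ℕ} (hn : 0 < n) (hm : 2 * m / (n + m : ℕ) < δ / 4)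
    (hshadow : ∀ k ≥ 2, ∀ ω : ℕ → X, ∃ y, ∀ j < k, ∀ s < n,
      dist (T^[j * (n + m) + s] y) (T^[s] (ω j)) < ε')
    (hent : c * n ≤ ∫ x, infoFn T μ P n x ∂μ) :
    ∀ᶠ k : ℕ in atTop, k * n * (c - 3 * η) - Real.log 2 ≤ Real.log
      (coverNum T (levelSet T Φ p (fun i => ∫ x, Φ i x ∂μ) δ (k * (n + m)))
        (k * (n + m)) ε) := by
  have hnpos : 0 < (n : ℝ) := by exact_mod_cast hn
  have hΦm : ∀ i, Measurable (Φ i) := fun i => (hΦc i).measurable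
  set α : ℕ → ℝ := fun i => ∫ x, Φ i x ∂μ with hα
  have hαb : ∀ i, |α i| ≤ 1 := fun i => by
    have := norm_integral_le_of_norm_le_const (μ := μ) (f := Φ i) (C := 1)
      (Eventually.of_forall (hΦb i))
    simpa using this
  set Z : X → ℝ := fun x => ∑ s ∈ Finset.range n, Kᶜ.indicator (fun _ => (1 : ℝ)) (T^[s] x)
    with hZ
  have hKm : MeasurableSet Kᶜ := hKc.measurableSet.compl
  have h1m : Measurable (Kᶜ.indicator fun _ => (1 : ℝ)) := measurable_const.indicator hKm
  have h1i : Integrable (Kᶜ.indicator fun _ => (1 : ℝ)) μ := (integrable_const 1).indicator hKm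
  have hZm : Measurable Z := Finset.measurable_sum _ fun s _ =>
    h1m.comp (hinv.iterate s).measurable
  have hZi : Integrable Z μ := integrable_finsetSum _ fun s _ =>
    (hinv.iterate s).integrable_comp_of_integrable h1i
  have hZint : ∫ x, Z x ∂μ < n * γ := by
    rw [hZ, integral_sum_comp_iterate hinv h1m h1i, integral_indicator_const _ hKm]
    simpa using mul_lt_mul_of_pos_left hKγ hnpos
  set g : (Fin n → Fin r) → ℝ := fun f => -Real.log (μ.real (itinerary T P n ⁻¹' {f})) with hg
  have hIm : Measurable (infoFn T μ P n) :=
    (measurable_of_finite g).comp (measurable_itinerary hT.measurable hP n)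
  have hIi : Integrable (infoFn T μ P n) μ := integrable_comp_itinerary μ hT.measurable hP n g
  have hIint : n * (c - η) < ∫ x, infoFn T μ P n x ∂μ := by nlinarith [mul_pos hnpos hη]
  set ℙ := Measure.infinitePi fun _ : ℕ => μ with hℙ
  set E : ℕ → Set (ℕ → X) := fun k => {ω |
    ∑' i, p i * |(∑ j ∈ Finset.range k, birkhoffAvgR T (Φ i) (n + m) (ω j)) / (k : ℝ) - α i|
      < δ / 4 ∧
    ∑ j ∈ Finset.range k, Z (ω j) ≤ k * (n * γ) ∧
    k * (n * (c - η)) ≤ ∑ j ∈ Finset.range k, infoFn T μ P n (ω j) ∧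
    ∀ j, 0 < μ.real (itinerary T P n ⁻¹' {itinerary T P n (ω j)})} with hE
  have hpos : ∀ᵐ ω ∂ℙ, ∀ j, 0 < μ.real (itinerary T P n ⁻¹' {itinerary T P n (ω j)}) :=
    ae_all_iff.2 fun j =>
      (measurePreserving_eval_infinitePi (fun _ : ℕ => μ) j).quasiMeasurePreserving.ae
      (ae_pos_itinerary μ P n)
  have hEae : ∀ᵐ ω ∂ℙ, ∀ᶠ k in atTop, ω ∈ E k := by
    filter_upwards [hpos, ae_tendsto_tsum_avg_sub μ hinv hΦm hΦb hp hps (L := n + m) (by omega),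
      ae_tendsto_avg_infinitePi μ Z hZm hZi,
      ae_tendsto_avg_infinitePi μ (infoFn T μ P n) hIm hIi] with ω h1 h2 h3 h4
    filter_upwards [h2.eventually_lt_const (by positivity : (0 : ℝ) < δ / 4),
      h3.eventually_lt_const hZint, h4.eventually_const_lt hIint, eventually_gt_atTop 0]
      with k hk2 hk3 hk4 hk0
    have hkpos : 0 < (k : ℝ) := by exact_mod_cast hk0
    refine ⟨hk2, ?_, ?_, h1⟩
    · rw [div_lt_iff₀ hkpos] at hk3
      linarith
    · rw [lt_div_iff₀ hkpos] at hk4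
      linarith
  filter_upwards [eventually_half_le_measureReal ℙ E hEae, eventually_ge_atTop 2] with k hk hk2
  have hkpos : 0 < (k : ℝ) := by
    have : 0 < k := by omega
    exact_mod_cast this
  have hcount := measureReal_le_coverNum_mul hT μ hP K hε hεε' hK k n m
    (levelSet T Φ p α δ (k * (n + m))) (E k) (k * (n * γ)) τ (k * (n * (c - η))) hτ ?_
    (fun ω hω => hω.2.1) (fun ω hω => hω.2.2.1) (fun ω hω => hω.2.2.2)
  swap
  · intro ω hω
    obtain ⟨y, hy⟩ := hshadow k hk2 ω
    refine ⟨y, ?_, hy⟩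
    have hdev := tsum_birkhoffAvgR_sub_le hΦb hp hps hp1 (by positivity : 0 ≤ δ / 4)
      (by omega : 0 < k) hn y ω (m := m) fun j hj s hs => (hε'D _ _ (hy j hj s hs)).le
    have hA : ∀ i, |birkhoffAvgR T (Φ i) (k * (n + m)) y| ≤ 1 := fun i =>
      abs_birkhoffAvgR_le_one (hΦb i) _ _
    have hB : ∀ i, |(∑ j ∈ Finset.range k, birkhoffAvgR T (Φ i) (n + m) (ω j)) / (k : ℝ)| ≤ 1 :=
      fun i => abs_avg_le_one (fun j => abs_birkhoffAvgR_le_one (hΦb i) _ _) _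
    have hs1 := summable_mul_abs_sub hp hps hA hB
    have hs2 := summable_mul_abs_sub hp hps hB hαb
    have htri := (summable_mul_abs_sub hp hps hA hαb).tsum_le_tsum (fun i => by
      rw [← mul_add]
      exact mul_le_mul_of_nonneg_left (abs_sub_le _ _ _) (hp i).le) (hs1.add hs2)
    rw [hs1.tsum_add hs2] at htri
    have := hω.1
    change ∑' i, p i * |birkhoffAvgR T (Φ i) (k * (n + m)) y - α i| < δ
    linarith
  have hbase : (1 + Real.exp (-τ) * r) ^ (k * n) ≤ Real.exp (k * n * η) := by
    calc (1 + Real.exp (-τ) * r) ^ (k * n) ≤ Real.exp η ^ (k * n) := by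
          refine pow_le_pow_left₀ (by positivity) ?_ _
          linarith [Real.add_one_le_exp η]
      _ = Real.exp (k * n * η) := by rw [← Real.exp_nat_mul]; push_cast; rfl
  have hfactor : Real.exp (τ * (k * (n * γ))) * (1 + Real.exp (-τ) * r) ^ (k * n) *
      Real.exp (-(k * (n * (c - η)))) ≤ Real.exp (-(k * n * (c - 3 * η))) := by
    calc _ ≤ Real.exp (τ * (k * (n * γ))) * Real.exp (k * n * η) *
          Real.exp (-(k * (n * (c - η)))) := by gcongr
      _ = Real.exp (τ * (k * (n * γ)) + k * n * η + -(k * (n * (c - η)))) := by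
          rw [Real.exp_add, Real.exp_add]
      _ ≤ _ := Real.exp_le_exp.2 (by nlinarith [mul_pos hkpos hnpos])
  set N := coverNum T (levelSet T Φ p α δ (k * (n + m))) (k * (n + m)) ε with hN
  have hfin : 1 / 2 ≤ (N : ℝ) * Real.exp (-(k * n * (c - 3 * η))) :=
    hk.trans (hcount.trans (mul_le_mul_of_nonneg_left hfactor (Nat.cast_nonneg N)))
  rw [Real.exp_neg, ← div_eq_mul_inv, le_div_iff₀ (Real.exp_pos _)] at hfin
  have hlog := Real.log_le_log (by positivity) hfin
  rw [Real.log_mul (by norm_num) (Real.exp_pos _).ne', Real.log_exp, one_div, Real.log_inv] at hlog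
  linarith

/-- **Proposition 3.2.** In a system with the specification property, for `(Φ_i)` dense in
the unit ball of `C(X)`, `(p_i)` positive with `Σ p_i = 1`, `μ` invariant and
`α_i = ∫ Φ_i dμ`, one has `Λ_Φ(α) ≥ h_μ`. -/
theorem lambda_ge_entropy {X : Type*} [MetricSpace X] [CompactSpace X]
    [MeasurableSpace X] [BorelSpace X] (T : X → X) (hT : Continuous T)
    (hspec : SpecificationProperty T)
    (Φ : ℕ → X → ℝ) (hΦc : ∀ i, Continuous (Φ i)) (hΦb : ∀ i x, |Φ i x| ≤ 1)
    (hdense : ∀ f : C(X, ℝ), ‖f‖ ≤ 1 → ∀ ε : ℝ, 0 < ε → ∃ i, ∀ x, |Φ i x - f x| < ε)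
    (p : ℕ → ℝ) (hp : ∀ i, 0 < p i) (hps : Summable p) (hp1 : ∑' i, p i = 1)
    (μ : Measure X) (hμ : IsProbabilityMeasure μ) (hinv : MeasurePreserving T μ μ)
    (α : ℕ → ℝ) (hα : ∀ i, α i = ∫ x, Φ i x ∂μ) :
    ksEntropy T μ ≤ LambdaPhi T Φ p α := by
  have hαeq : α = fun i => ∫ x, Φ i x ∂μ := funext hα
  subst hαeq
  refine le_of_forall_lt fun c₀ hc₀ => ?_
  obtain ⟨c₁, hc₀₁, hc₁⟩ := exists_between hc₀
  refine hc₀₁.trans_le ?_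
  simp only [ksEntropy, lt_iSup_iff] at hc₁
  obtain ⟨P₀, hP₀, hfin, hlim⟩ := hc₁
  obtain ⟨c₂, hc₁₂, hc₂⟩ := exists_between hlim
  lift c₂ to ℝ≥0 using (hc₂.trans_le le_top).ne
  lift c₁ to ℝ≥0 using (hc₁₂.trans_le le_top).ne
  have hcc : (c₁ : ℝ) < c₂ := by exact_mod_cast hc₁₂
  obtain ⟨B, hB⟩ := hfin.bddAbove
  have hPlt : ∀ x, P₀ x < B + 1 := fun x => Nat.lt_succ_of_le (hB ⟨x, rfl⟩)
  set P : X → Fin (B + 1) := fun x => ⟨P₀ x, hPlt x⟩ with hPdef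
  have hP : Measurable P := measurable_to_countable' fun a => by
    have : P ⁻¹' {a} = P₀ ⁻¹' {(a : ℕ)} := by
      ext x
      simp [hPdef, Fin.ext_iff]
    rw [this]
    exact hP₀ (measurableSet_singleton _)
  set η : ℝ := (c₂ - c₁) / 4 with hηdef
  have hη : 0 < η := by rw [hηdef]; linarith
  obtain ⟨τ, hτ0, hτr⟩ : ∃ τ : ℝ, 0 < τ ∧ Real.exp (-τ) * ((B + 1 : ℕ) : ℝ) ≤ η := by
    have h : Tendsto (fun τ : ℝ => Real.exp (-τ) * ((B + 1 : ℕ) : ℝ)) atTop (𝓝 0) := by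
      simpa using (Real.tendsto_exp_neg_atTop_nhds_zero.mul_const ((B + 1 : ℕ) : ℝ))
    obtain ⟨τ, h1, h2⟩ := ((eventually_gt_atTop 0).and (h.eventually_le_const hη)).exists
    exact ⟨τ, h1, h2⟩
  obtain ⟨K, hKc, hKγ, ε, hε, hK⟩ :=
    exists_isClosed_forall_dist_lt μ P hP (η / τ) (div_pos hη hτ0)
  refine le_iSup₂_of_le (ε / 4) (by positivity) (le_iInf₂ fun δ hδ => ?_)
  obtain ⟨e, he, heD⟩ := exists_forall_tsum_lt hΦc hΦb hp hps (by positivity : 0 < δ / 4)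
  obtain ⟨m, hm⟩ := hspec.exists_shadow (ε := min e (ε / 4)) (by positivity)
  have hn1 : ∀ᶠ n : ℕ in atTop, 2 * (m : ℝ) / (n + m : ℕ) < δ / 4 := by
    have h : Tendsto (fun n : ℕ => 2 * (m : ℝ) / (n + m : ℕ)) atTop (𝓝 0) :=
      (tendsto_const_nhds.div_atTop tendsto_natCast_atTop_atTop).comp (tendsto_add_atTop_nat m)
    exact h.eventually_lt_const (by positivity)
  have hn2 : ∀ᶠ n : ℕ in atTop, c₁ * m + Real.log 2 ≤ n * η :=
    (tendsto_natCast_atTop_atTop.atTop_mul_const hη).eventually_ge_atTop _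
  obtain ⟨n, hn1, hn2, hent, hn⟩ := (hn1.and (hn2.and ((eventually_lt_of_lt_liminf hc₂).and
    (eventually_gt_atTop 0)))).exists
  have hnpos : 0 < (n : ℝ) := by exact_mod_cast hn
  have hent' : (c₂ : ℝ) * n ≤ ∫ x, infoFn T μ P n x ∂μ := by
    have h1 : (c₂ : ℝ≥0∞) * n ≤ partInfo T μ P₀ n := by
      have := mul_le_mul_left hent.le (n : ℝ≥0∞)
      rwa [ENNReal.div_mul_cancel (by exact_mod_cast hn.ne') (by simp)] at this
    have h2 := h1.trans (partInfo_le_integral_infoFn μ hT.measurable hP n)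
    have h3 : (c₂ : ℝ≥0∞) * n = ENNReal.ofReal (c₂ * n) := by
      rw [ENNReal.ofReal_mul (NNReal.coe_nonneg c₂), ENNReal.ofReal_coe_nnreal, ENNReal.ofReal_natCast]
    rw [h3] at h2
    have h4 : 0 ≤ ∫ x, infoFn T μ P n x ∂μ := integral_nonneg fun x =>
      neg_nonneg.2 (Real.log_nonpos measureReal_nonneg measureReal_le_one)
    exact (ENNReal.ofReal_le_ofReal_iff h4).1 h2
  have hev := eventually_le_log_coverNum hT hΦc hΦb hp hps hp1 μ hinv hP hKc
    (by positivity : 0 < ε / 4) (min_le_right e (ε / 4))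
    (fun x hx y hy hxy => hK x hx y hy (by linarith)) hKγ hτ0.le hη hτr
    (by field_simp; exact le_rfl) hδ (fun x y hxy => heD x y (hxy.trans_le (min_le_left _ _)))
    hn hn1 (fun k hk ω => hm k hk n hn ω) hent'
  refine le_limsup_of_frequently_le (frequently_atTop.2 fun M => ?_)
  obtain ⟨k, hk, hkM, hk0⟩ := (hev.and ((eventually_ge_atTop M).and
    (eventually_gt_atTop 0))).exists
  refine ⟨k * (n + m), hkM.trans (Nat.le_mul_of_pos_right k (by omega)), ?_⟩
  rw [← ENNReal.ofReal_coe_nnreal]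
  refine ENNReal.ofReal_le_ofReal ?_
  have hk1 : (1 : ℝ) ≤ k := by exact_mod_cast hk0
  have hNpos : (0 : ℝ) < (k * (n + m) : ℕ) := by
    have : 0 < k * (n + m) := Nat.mul_pos hk0 (by omega)
    exact_mod_cast this
  rw [le_div_iff₀ hNpos]
  refine le_trans ?_ hk
  have hlog2 : 0 ≤ Real.log 2 := Real.log_nonneg (by norm_num)
  have hrate : (c₂ : ℝ) - 3 * η = c₁ + η := by rw [hηdef]; ring
  rw [hrate]
  push_cast
  nlinarith [mul_le_mul_of_nonneg_left hn2 (by positivity : (0 : ℝ) ≤ k),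
    mul_le_mul_of_nonneg_right hk1 hlog2]
end

section
/- Let (X,T) be a dynamical system satisfying the specification property, let (Φ_i)_{i≥1} be a sequence of continuous functions dense in the unit ball of C(X), let (p_i)_{i≥1} be positive numbers with Σ p_i = 1, let μ be a T-invariant Borel probability measure and α = (α_i)_{i≥1} with α_i = ∫ Φ_i dμ. Then the Bowen topological entropy of the set G_μ of μ-generic points satisfies h_top(G_μ) ≥ Λ_Φ(α). -/
open MeasureTheory Filter Topology Set
open scoped ENNReal NNReal

/-!  General definitions: Bowen topological entropy (via covers by Bowen balls),
measure-theoretic (Kolmogorov–Sinai) entropy, generic points, saturated systems,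
and the specification property. -/

variable {X : Type*}

/-- Below the covering number there are separated sets of every cardinality. -/
theorem exists_separated_of_le_coverNum {X : Type*} [PseudoMetricSpace X] (T : X → X)
    (S : Set X) (n : ℕ) {ε : ℝ} (hε : 0 < ε) (m : ℕ) (hm : m ≤ coverNum T S n ε) :
    ∃ F : Finset X, F.card = m ∧ (∀ x ∈ F, x ∈ S) ∧
      ∀ x ∈ F, ∀ y ∈ F, y ∈ bowenBall T x n ε → x = y := by
  induction m with
  | zero => exact ⟨∅, by simp⟩
  | succ m ih =>
    obtain ⟨F, hFc, hFS, hF⟩ := ih (by omega)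
    have hnot : ¬ S ⊆ ⋃ x ∈ F, bowenBall T x n ε := fun h =>
      Nat.notMem_of_lt_sInf (show m < coverNum T S n ε by omega) ⟨F, hFc, h⟩
    obtain ⟨z, hzS, hz⟩ := Set.not_subset.1 hnot
    have hz' : ∀ x ∈ F, z ∉ bowenBall T x n ε := by simpa using hz
    have hsymm : ∀ x ∈ F, x ∉ bowenBall T z n ε := fun x hx h =>
      hz' x hx fun j hj => by rw [dist_comm]; exact h j hj
    have hzF : z ∉ F := fun hzF => hz' z hzF fun j _ => by simpa using hε
    refine ⟨F.cons z hzF, by simp [hFc], ?_, ?_⟩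
    · simpa [hzS] using hFS
    · intro x hx y hy hxy
      rw [Finset.mem_cons] at hx hy
      rcases hx with rfl | hx <;> rcases hy with rfl | hy
      · rfl
      · exact absurd hxy (hsymm y hy)
      · exact absurd hxy (hz' x hx)
      · exact hF x hx y hy hxy

/-- A cover of a product of finite sets by sets determining the first `r` coordinates has total
weight at least one. -/
theorem one_le_tsum_of_cover {X ι : Type*} [MeasurableSpace X] [MeasurableSingletonClass X]
    (W : ℕ → Finset X) (hW : ∀ i, (W i).Nonempty) (C : Set ι) (hC : C.Countable)
    (A : ι → Set (∀ i, W i)) (hA : ∀ ω, ∃ q ∈ C, ω ∈ A q) (r : ι → ℕ)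
    (hr : ∀ q ∈ C, ∀ ω ∈ A q, ∀ ω' ∈ A q, ∀ i < r q, ω i = ω' i) :
    1 ≤ ∑' q : C, ∏ i ∈ Finset.range (r q), ((W i).card : ℝ≥0∞)⁻¹ := by
  have : ∀ i, Nonempty (W i) := fun i => (hW i).to_subtype
  let ν : ∀ i, Measure (W i) := fun i => ProbabilityTheory.uniformOn Set.univ
  have : ∀ i, IsProbabilityMeasure (ν i) := fun i =>
    ProbabilityTheory.isProbabilityMeasure_uniformOn Set.finite_univ Set.univ_nonempty
  have hν : ∀ i (w : W i), ν i {w} = ((W i).card : ℝ≥0∞)⁻¹ := by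
    intro i w
    simp [ν, ProbabilityTheory.uniformOn_univ]
  let P := Measure.infinitePi ν
  calc (1 : ℝ≥0∞) = P Set.univ := measure_univ.symm
    _ ≤ P (⋃ q ∈ C, A q) := measure_mono fun ω _ => by simpa using hA ω
    _ ≤ ∑' q : C, P (A q) := measure_biUnion_le P hC A
    _ ≤ _ := by
      refine ENNReal.tsum_le_tsum fun q => ?_
      rcases (A q).eq_empty_or_nonempty with h | ⟨ω, hω⟩
      · simp [h]
      · calc P (A q) ≤ P (Set.pi (Finset.range (r q)) fun i => {ω i}) :=
              measure_mono fun ω' hω' i hi =>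
                hr q q.2 ω' hω' ω hω i (by simpa using hi)
          _ = _ := by
              rw [Measure.infinitePi_pi ν fun i _ => measurableSet_singleton _]
              exact Finset.prod_congr rfl fun i _ => hν i _

/-- Points of the approximate level sets have Birkhoff sums close to the integral. -/
theorem exists_levelSet_sum_le {X : Type*} [MetricSpace X] [CompactSpace X]
    [MeasurableSpace X] [BorelSpace X] (T : X → X)
    (Φ : ℕ → X → ℝ) (hΦc : ∀ i, Continuous (Φ i)) (hΦb : ∀ i x, |Φ i x| ≤ 1)
    (hdense : ∀ f : C(X, ℝ), ‖f‖ ≤ 1 → ∀ ε : ℝ, 0 < ε → ∃ i, ∀ x, |Φ i x - f x| < ε)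
    (p : ℕ → ℝ) (hp : ∀ i, 0 < p i) (hps : Summable p)
    (μ : Measure X) [IsProbabilityMeasure μ]
    (α : ℕ → ℝ) (hα : ∀ i, α i = ∫ x, Φ i x ∂μ) (f : C(X, ℝ)) {γ : ℝ} (hγ : 0 < γ) :
    ∃ δ > 0, ∀ n : ℕ, ∀ x ∈ levelSet T Φ p α δ n,
      |∑ j ∈ Finset.range n, (f (T^[j] x) - ∫ y, f y ∂μ)| ≤ γ * n := by
  have hint : ∀ g : X → ℝ, Continuous g → Integrable g μ := fun g hg =>
    hg.integrable_of_hasCompactSupport (HasCompactSupport.of_compactSpace g)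
  have hαb : ∀ i, |α i| ≤ 1 := by
    intro i
    rw [hα]
    simpa using norm_integral_le_of_norm_le_const (μ := μ) (f := Φ i) (C := 1)
      (Eventually.of_forall fun x => hΦb i x)
  have havg : ∀ i n x, |birkhoffAvgR T (Φ i) n x| ≤ 1 := by
    intro i n x
    rw [birkhoffAvgR, abs_div, Nat.abs_cast]
    refine div_le_one_of_le₀ ((Finset.abs_sum_le_sum_abs _ _).trans ?_) n.cast_nonneg
    exact (Finset.sum_le_sum fun j _ => hΦb i _).trans (by simp)
  have hsum : ∀ n x, Summable fun i => p i * |birkhoffAvgR T (Φ i) n x - α i| := by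
    intro n x
    refine Summable.of_nonneg_of_le (fun i => mul_nonneg (hp i).le (abs_nonneg _)) (fun i => ?_)
      (hps.mul_right 2)
    exact mul_le_mul_of_nonneg_left
      ((abs_sub _ _).trans (by linarith [havg i n x, hαb i])) (hp i).le
  set B : ℝ := ‖f‖ + 1
  have hB : 0 < B := by positivity
  obtain ⟨i, hi⟩ := hdense (B⁻¹ • f) (by
    rw [norm_smul, norm_inv, Real.norm_of_nonneg hB.le, inv_mul_le_one₀ hB]
    simp [B]) (γ / (3 * B)) (by positivity)
  have hi' : ∀ x, |f x - B * Φ i x| ≤ γ / 3 := by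
    intro x
    have h := (hi x).le
    have h1 : f x - B * Φ i x = - (B * (Φ i x - (B⁻¹ • f) x)) := by
      simp only [ContinuousMap.smul_apply, smul_eq_mul]
      field_simp
      ring
    rw [h1, abs_neg, abs_mul, abs_of_pos hB]
    calc B * _ ≤ B * (γ / (3 * B)) := mul_le_mul_of_nonneg_left h hB.le
      _ = γ / 3 := by field_simp
  have hI : |B * α i - ∫ y, f y ∂μ| ≤ γ / 3 := by
    have h1 : B * α i - ∫ y, f y ∂μ = ∫ y, (B * Φ i y - f y) ∂μ := by
      rw [integral_sub ((hint _ (hΦc i)).const_mul B) (hint _ f.continuous),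
        integral_const_mul, hα]
    rw [h1]
    simpa using norm_integral_le_of_norm_le_const (μ := μ) (f := fun y => B * Φ i y - f y)
      (C := γ / 3) (Eventually.of_forall fun x => by
        rw [Real.norm_eq_abs, abs_sub_comm]; exact hi' x)
  refine ⟨p i * (γ / (3 * B)), mul_pos (hp i) (by positivity), fun n x hx => ?_⟩
  rcases n.eq_zero_or_pos with rfl | hn
  · simp
  have hn' : (0 : ℝ) < n := by exact_mod_cast hn
  have h1 : |birkhoffAvgR T (Φ i) n x - α i| ≤ γ / (3 * B) := by
    have h2 := ((hsum n x).le_tsum i fun j _ =>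
      mul_nonneg (hp j).le (abs_nonneg _)).trans (le_of_lt hx)
    exact le_of_mul_le_mul_left h2 (hp i)
  have h2 : |∑ j ∈ Finset.range n, (Φ i (T^[j] x) - α i)| ≤ γ / (3 * B) * n := by
    have h3 : ∑ j ∈ Finset.range n, (Φ i (T^[j] x) - α i)
        = (birkhoffAvgR T (Φ i) n x - α i) * n := by
      rw [birkhoffAvgR, Finset.sum_sub_distrib]
      field_simp
      simp
    rw [h3, abs_mul, Nat.abs_cast]
    exact mul_le_mul_of_nonneg_right h1 hn'.le
  have h4 : ∑ j ∈ Finset.range n, (f (T^[j] x) - ∫ y, f y ∂μ)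
      = ∑ j ∈ Finset.range n, (f (T^[j] x) - B * Φ i (T^[j] x))
        + B * ∑ j ∈ Finset.range n, (Φ i (T^[j] x) - α i)
        + ∑ j ∈ Finset.range n, (B * α i - ∫ y, f y ∂μ) := by
    rw [Finset.mul_sum, ← Finset.sum_add_distrib, ← Finset.sum_add_distrib]
    exact Finset.sum_congr rfl fun j _ => by ring
  have h5 : |∑ j ∈ Finset.range n, (f (T^[j] x) - B * Φ i (T^[j] x))| ≤ γ / 3 * n :=
    (Finset.abs_sum_le_sum_abs _ _).trans
      ((Finset.sum_le_sum fun j _ => hi' _).trans (by simp [mul_comm]))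
  have h6 : |B * ∑ j ∈ Finset.range n, (Φ i (T^[j] x) - α i)| ≤ γ / 3 * n := by
    rw [abs_mul, abs_of_pos hB]
    calc B * _ ≤ B * (γ / (3 * B) * n) := mul_le_mul_of_nonneg_left h2 hB.le
      _ = γ / 3 * n := by field_simp
  have h7 : |∑ j ∈ Finset.range n, (B * α i - ∫ y, f y ∂μ)| ≤ γ / 3 * n :=
    (Finset.abs_sum_le_sum_abs _ _).trans
      ((Finset.sum_le_sum fun j _ => hI).trans (by simp [mul_comm]))
  rw [h4]
  calc _ ≤ _ + _ + _ := abs_add_three _ _ _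
    _ ≤ γ / 3 * n + γ / 3 * n + γ / 3 * n := by gcongr
    _ = γ * n := by ring

/-- Orbit segments grouped into levels, with the gap before a segment of level `k` adapted to
the precision `h / 2 ^ (k + 1)`, are shadowed by a single orbit, with precision `h / 2 ^ k` at
level `k`. -/
theorem exists_shadowing {X : Type*} [MetricSpace X] [CompactSpace X] (T : X → X)
    (hT : Continuous T) {h : ℝ} (hh : 0 < h) (M n b κ t : ℕ → ℕ)
    (hM : ∀ K k : ℕ, 2 ≤ k → ∀ x : ℕ → X, ∀ a b : ℕ → ℕ,
      (∀ i < k, a i ≤ b i) → (∀ i, i + 1 < k → b i + M K ≤ a (i + 1)) →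
      ∃ y : X, ∀ i < k, ∀ n ≤ b i - a i,
        dist (T^[a i + n] y) (T^[n] (x i)) < h / 2 ^ (K + 1))
    (hn : ∀ k, 1 ≤ n k) (hb : StrictMono b) (hb0 : b 0 = 0)
    (hκ : ∀ K i, b K ≤ i → i < b (K + 1) → κ i = K)
    (ht : ∀ i, t (i + 1) = t i + M (κ i) + n (κ i)) (x : ℕ → X) :
    ∃ y, ∀ i, ∀ j < n (κ i),
      dist (T^[t i + M (κ i) + j] y) (T^[j] (x i)) ≤ h / 2 ^ κ i := by
  have htm : StrictMono t := strictMono_nat_of_lt_succ fun i => by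
    have := hn (κ i); have := ht i; omega
  have key : ∀ K, ∃ y, ∀ i < b K, ∀ j < n (κ i),
      dist (T^[t i + M (κ i) + j] y) (T^[j] (x i)) ≤ h / 2 ^ κ i - h / 2 ^ K := by
    intro K
    induction K with
    | zero => exact ⟨x 0, by simp [hb0]⟩
    | succ K ih =>
      obtain ⟨y, hy⟩ := ih
      have hlt : b K < b (K + 1) := hb (Nat.lt_succ_self K)
      have hhalf : h / 2 ^ K = 2 * (h / 2 ^ (K + 1)) := by field_simp; ring
      have hnK := hn K
      obtain ⟨z, hz⟩ := hM K (1 + (b (K + 1) - b K)) (by omega)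
        (fun q => Nat.casesOn q y fun q => x (b K + q))
        (fun q => Nat.casesOn q 0 fun q => t (b K + q) + M K)
        (fun q => Nat.casesOn q (t (b K)) fun q => t (b K + q) + M K + (n K - 1))
        (by
          intro i hi
          cases i with
          | zero => exact Nat.zero_le _
          | succ q => exact Nat.le_add_right _ _)
        (by
          intro i hi
          cases i with
          | zero => exact le_rfl
          | succ q =>
            have h1 := ht (b K + q)
            rw [hκ K (b K + q) (by omega) (by omega)] at h1
            change t (b K + q) + M K + (n K - 1) + M K ≤ t (b K + q + 1) + M K
            omega)
      refine ⟨z, fun i hi j hj => ?_⟩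
      by_cases hiK : i < b K
      · have h1 := hy i hiK j hj
        have h2 : dist (T^[0 + (t i + M (κ i) + j)] z) (T^[t i + M (κ i) + j] y)
            < h / 2 ^ (K + 1) := by
          refine hz 0 (by omega) (t i + M (κ i) + j) ?_
          change _ ≤ t (b K) - 0
          have h3 := htm.monotone (show i + 1 ≤ b K by omega)
          have h4 := ht i
          omega
        rw [zero_add] at h2
        have h3 := dist_triangle (T^[t i + M (κ i) + j] z) (T^[t i + M (κ i) + j] y)
          (T^[j] (x i))
        linarith
      · have hκi : κ i = K := hκ K i (by omega) hi
        rw [hκi] at hj ⊢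
        obtain ⟨q, rfl⟩ : ∃ q, i = b K + q := ⟨i - b K, by omega⟩
        have h2 : dist (T^[t (b K + q) + M K + j] z) (T^[j] (x (b K + q)))
            < h / 2 ^ (K + 1) := by
          refine hz (q + 1) (by omega) j ?_
          change j ≤ t (b K + q) + M K + (n K - 1) - (t (b K + q) + M K)
          omega
        linarith
  let S : ℕ → Set X := fun K => {y | ∀ i < b K, ∀ j < n (κ i),
    dist (T^[t i + M (κ i) + j] y) (T^[j] (x i)) ≤ h / 2 ^ κ i}
  have hSc : ∀ K, IsClosed (S K) := by
    intro K
    simp only [S, Set.ofPred_forall]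
    refine isClosed_iInter fun i => isClosed_iInter fun _ => isClosed_iInter fun j =>
      isClosed_iInter fun _ => isClosed_le ?_ continuous_const
    exact (hT.iterate _).dist continuous_const
  obtain ⟨y, hy⟩ := IsCompact.nonempty_iInter_of_sequence_nonempty_isCompact_isClosed S
    (fun K y hy i hi => hy i (hi.trans (hb (Nat.lt_succ_self K))))
    (fun K => by
      obtain ⟨y, hy⟩ := key K
      exact ⟨y, fun i hi j hj => (hy i hi j hj).trans (by
        have : 0 < h / 2 ^ K := by positivity
        linarith)⟩)
    (hSc 0).isCompact hSc
  refine ⟨y, fun i => ?_⟩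
  have := Set.mem_iInter.1 hy (i + 1)
  exact this i (lt_of_lt_of_le (Nat.lt_succ_self i) (hb.le_apply))

/-- A strictly increasing sequence of natural numbers partitions the integers above its first
value into consecutive intervals. -/
theorem exists_le_and_lt_succ {t : ℕ → ℕ} (ht : StrictMono t) {m : ℕ} (hm : t 0 ≤ m) :
    ∃ i, t i ≤ m ∧ m < t (i + 1) := by
  have hex : ∃ i, m < t i := ⟨m + 1, lt_of_lt_of_le (Nat.lt_succ_self m) ht.le_apply⟩
  have h0 : Nat.find hex ≠ 0 := by
    intro h0
    have := Nat.find_spec hex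
    rw [h0] at this
    omega
  refine ⟨Nat.find hex - 1, not_lt.1 (Nat.find_min hex (by omega)), ?_⟩
  rw [Nat.sub_add_cancel (by omega)]
  exact Nat.find_spec hex

/-- A sequence with bounded increments whose increments along a slowly growing sequence of times
are negligible grows sublinearly. -/
theorem tendsto_div_zero_of_increments (D : ℕ → ℝ) {C : ℝ} (hC : 0 ≤ C)
    (hD : ∀ m r, |D (m + r) - D m| ≤ C * r) (t : ℕ → ℕ) (ht : StrictMono t)
    (hblock : ∀ γ > 0, ∀ᶠ i in atTop, |D (t (i + 1)) - D (t i)| ≤ γ * (t (i + 1) - t i))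
    (hgrow : ∀ γ > 0, ∀ᶠ i in atTop, (t (i + 1) : ℝ) - t i ≤ γ * t i) :
    Tendsto (fun m : ℕ => D m / m) atTop (𝓝 0) := by
  rw [Metric.tendsto_atTop]
  intro ε hε
  set γ := ε / (2 * (C + 1)) with hγdef
  have hγ : 0 < γ := by positivity
  have hγε : γ * (C + 1) = ε / 2 := by rw [hγdef]; field_simp
  obtain ⟨I, hI⟩ := eventually_atTop.1 ((hblock γ hγ).and (hgrow γ hγ))
  have h1 : ∀ r, |D (t (I + r))| ≤ |D (t I)| + γ * t (I + r) := by
    intro r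
    induction r with
    | zero => simp; positivity
    | succ r ih =>
      have h2 := (hI (I + r) (by omega)).1
      have h3 := abs_sub_abs_le_abs_sub (D (t (I + r + 1))) (D (t (I + r)))
      rw [← add_assoc]
      linarith
  have h2 : ∀ m ≥ t I, |D m| ≤ |D (t I)| + ε / 2 * m := by
    intro m hm
    obtain ⟨i, hi1, hi2⟩ := exists_le_and_lt_succ ht
      ((ht.monotone (Nat.zero_le I)).trans hm)
    have hIi : I ≤ i := by
      by_contra hlt
      have := ht.monotone (show i + 1 ≤ I by omega)
      omega
    obtain ⟨r, rfl⟩ := Nat.exists_eq_add_of_le hIi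
    obtain ⟨s, rfl⟩ := Nat.exists_eq_add_of_le hi1
    have h3 := hD (t (I + r)) s
    have h4 := abs_sub_abs_le_abs_sub (D (t (I + r) + s)) (D (t (I + r)))
    have h5 := (hI (I + r) (by omega)).2
    have h6 := h1 r
    have h7 : (s : ℝ) ≤ γ * t (I + r) := by
      have : (t (I + r) : ℝ) + s < t (I + r + 1) := by exact_mod_cast hi2
      linarith
    have h8 : C * s ≤ C * (γ * t (I + r)) := mul_le_mul_of_nonneg_left h7 hC
    have h9 : ε / 2 * t (I + r) ≤ ε / 2 * ((t (I + r) + s : ℕ) : ℝ) := by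
      gcongr
    rw [← hγε] at h9 ⊢
    linarith
  obtain ⟨m₀, hm₀⟩ := exists_nat_gt (|D (t I)| / (ε / 2))
  refine ⟨max (t I) (m₀ + 1), fun m hm => ?_⟩
  have hm1 : (m₀ : ℝ) < m := by exact_mod_cast (le_of_max_le_right hm)
  have hm2 : (0 : ℝ) < m := lt_of_le_of_lt m₀.cast_nonneg hm1
  rw [Real.dist_eq, sub_zero, abs_div, Nat.abs_cast, div_lt_iff₀ hm2]
  have h3 := h2 m (le_of_max_le_left hm)
  have h4 : |D (t I)| < ε / 2 * m := by
    rw [div_lt_iff₀ (by positivity)] at hm₀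
    nlinarith
  linarith

/-- A point whose orbit shadows, with increasing precision, segments taken from approximate level
sets is generic. -/
theorem isGeneric_of_shadowing {X : Type*} [MetricSpace X] [CompactSpace X]
    [MeasurableSpace X] (T : X → X) (μ : Measure X)
    (Φ : ℕ → X → ℝ) (p α : ℕ → ℝ)
    (hgood : ∀ f : C(X, ℝ), ∀ γ > 0, ∃ δ > 0, ∀ n : ℕ, ∀ x ∈ levelSet T Φ p α δ n,
      |∑ j ∈ Finset.range n, (f (T^[j] x) - ∫ y, f y ∂μ)| ≤ γ * n)
    (h : ℝ) (M n κ t : ℕ → ℕ) (hn : ∀ k, 1 ≤ n k) (hMn : ∀ k, k * M k ≤ n k)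
    (hκ : Tendsto κ atTop atTop)
    (ht : ∀ i, t (i + 1) = t i + M (κ i) + n (κ i))
    (hgrow : ∀ γ > 0, ∀ᶠ i in atTop, (t (i + 1) : ℝ) - t i ≤ γ * t i)
    (x : ℕ → X) (hx : ∀ i, x i ∈ levelSet T Φ p α (1 / ((κ i : ℝ) + 1)) (n (κ i))) (y : X)
    (hy : ∀ i, ∀ j < n (κ i),
      dist (T^[t i + M (κ i) + j] y) (T^[j] (x i)) ≤ h / 2 ^ κ i) :
    IsGeneric T μ y := by
  intro f
  set c := ∫ z, f z ∂μ with hc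
  set D : ℕ → ℝ := fun m => ∑ j ∈ Finset.range m, (f (T^[j] y) - c) with hDdef
  set C := ‖f‖ + |c| with hCdef
  have hC : 0 ≤ C := by positivity
  have hfC : ∀ z, |f z - c| ≤ C := fun z =>
    (abs_sub _ _).trans (add_le_add_left (f.norm_coe_le_norm z) _)
  have hDadd : ∀ m r, D (m + r) - D m = ∑ j ∈ Finset.range r, (f (T^[m + j] y) - c) := by
    intro m r
    simp only [hDdef, Finset.sum_range_add, add_sub_cancel_left]
  have hD : ∀ m r, |D (m + r) - D m| ≤ C * r := by
    intro m r
    rw [hDadd]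
    exact (Finset.abs_sum_le_sum_abs _ _).trans
      ((Finset.sum_le_sum fun j _ => hfC _).trans (by simp [mul_comm]))
  have htm : StrictMono t := strictMono_nat_of_lt_succ fun i => by
    have := hn (κ i); have := ht i; omega
  have hblock : ∀ γ > 0, ∀ᶠ i in atTop,
      |D (t (i + 1)) - D (t i)| ≤ γ * (t (i + 1) - t i) := by
    intro γ hγ
    obtain ⟨δ, hδ, hδ'⟩ := hgood f (γ / 3) (by positivity)
    obtain ⟨η, hη, hη'⟩ := Metric.uniformContinuous_iff.1
      (CompactSpace.uniformContinuous_of_continuous f.continuous) (γ / 3) (by positivity)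
    have e1 : ∀ᶠ k : ℕ in atTop, 1 / ((k : ℝ) + 1) < δ :=
      tendsto_one_div_add_atTop_nhds_zero_nat.eventually_lt_const hδ
    have e2 : ∀ᶠ k : ℕ in atTop, h / 2 ^ k < η := by
      have : Tendsto (fun k : ℕ => h / (2 : ℝ) ^ k) atTop (𝓝 0) :=
        tendsto_const_nhds.div_atTop (tendsto_pow_atTop_atTop_of_one_lt one_lt_two)
      exact this.eventually_lt_const hη
    have e3 : ∀ᶠ k : ℕ in atTop, C / (γ / 3) ≤ (k : ℝ) :=
      tendsto_natCast_atTop_atTop.eventually_ge_atTop _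
    filter_upwards [hκ.eventually (e1.and (e2.and e3))] with i ⟨h1, h2, h3⟩
    have hti := ht i
    have hxi := hx i
    have hyi := hy i
    generalize κ i = k at *
    have hMnk : (k : ℝ) * M k ≤ n k := by exact_mod_cast hMn k
    have hM0 : (0 : ℝ) ≤ M k := Nat.cast_nonneg _
    have b1 : |D (t i + M k) - D (t i)| ≤ γ / 3 * n k := by
      refine (hD _ _).trans ?_
      rw [div_le_iff₀ (by positivity)] at h3
      calc C * M k ≤ k * (γ / 3) * M k := mul_le_mul_of_nonneg_right h3 hM0
        _ = γ / 3 * (k * M k) := by ring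
        _ ≤ γ / 3 * n k := mul_le_mul_of_nonneg_left hMnk (by positivity)
    have b2 : |∑ j ∈ Finset.range (n k), (f (T^[j] (x i)) - c)| ≤ γ / 3 * n k :=
      hδ' _ _ (lt_trans hxi h1)
    have b3 : |∑ j ∈ Finset.range (n k), (f (T^[t i + M k + j] y) - f (T^[j] (x i)))|
        ≤ γ / 3 * n k := by
      refine (Finset.abs_sum_le_sum_abs _ _).trans
        ((Finset.sum_le_sum fun j hj => ?_).trans (?_ : ∑ _j ∈ Finset.range (n k), γ / 3 ≤ _))
      · exact (hη' ((hyi j (Finset.mem_range.1 hj)).trans_lt h2)).le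
      · simp [mul_comm]
    have b4 : D (t i + M k + n k) - D (t i + M k)
        = ∑ j ∈ Finset.range (n k), (f (T^[t i + M k + j] y) - f (T^[j] (x i)))
          + ∑ j ∈ Finset.range (n k), (f (T^[j] (x i)) - c) := by
      rw [hDadd, ← Finset.sum_add_distrib]
      exact Finset.sum_congr rfl fun j _ => by ring
    rw [hti]
    push_cast
    have b5 : D (t i + M k + n k) - D (t i) = (D (t i + M k) - D (t i))
        + ∑ j ∈ Finset.range (n k), (f (T^[t i + M k + j] y) - f (T^[j] (x i)))
        + ∑ j ∈ Finset.range (n k), (f (T^[j] (x i)) - c) := by linarith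
    have b6 : 0 ≤ γ * M k := by positivity
    rw [b5]
    refine (abs_add_three _ _ _).trans ?_
    linarith
  have hlim := (tendsto_div_zero_of_increments D hC hD t htm hblock hgrow).add_const c
  rw [zero_add] at hlim
  refine hlim.congr' ?_
  filter_upwards [eventually_gt_atTop 0] with m hm
  have hm' : (m : ℝ) ≠ 0 := by positivity
  simp only [hDdef, Finset.sum_sub_distrib, Finset.sum_const, Finset.card_range, nsmul_eq_mul]
  field_simp
  ring

/-- If the gaps are short compared with the blocks, the number of choices made before a time `m`
is at least `exp (τ m)`. -/
theorem exists_prod_card_inv_le {X : Type*} (W : ℕ → Finset X) {s τ : ℝ}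
    (hτ : 0 ≤ τ) {A : ℕ} (hA : 1 ≤ A) (hAs : τ * (A + 1) ^ 2 ≤ s * A ^ 2)
    (M n κ t : ℕ → ℕ) (hn : ∀ k, 1 ≤ n k) (hMn : ∀ k, A * M k ≤ n k)
    (hW : ∀ k, Real.exp (s * n k) ≤ (W k).card) (ht0 : t 0 = 0)
    (ht : ∀ i, t (i + 1) = t i + M (κ i) + n (κ i))
    (hgrow : ∀ γ > 0, ∀ᶠ i in atTop, (t (i + 1) : ℝ) - t i ≤ γ * t i) :
    ∃ m₀, ∀ m ≥ m₀, ∃ i, t i ≤ m ∧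
      ∏ j ∈ Finset.range i, ((W (κ j)).card : ℝ≥0∞)⁻¹ ≤ ENNReal.ofReal (Real.exp (-τ * m)) := by
  have htm : StrictMono t := strictMono_nat_of_lt_succ fun i => by
    have := hn (κ i); have := ht i; omega
  have hA' : (0 : ℝ) < A := by exact_mod_cast hA
  have hL : ∀ i, (A : ℝ) * t i ≤ (A + 1) * ∑ j ∈ Finset.range i, (n (κ j) : ℝ) := by
    intro i
    induction i with
    | zero => simp [ht0]
    | succ i ih =>
      rw [Finset.sum_range_succ, ht]
      push_cast
      have : (A : ℝ) * M (κ i) ≤ n (κ i) := by exact_mod_cast hMn (κ i)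
      linarith
  have hprod : ∀ i, ∏ j ∈ Finset.range i, ((W (κ j)).card : ℝ≥0∞)⁻¹
      ≤ ENNReal.ofReal (Real.exp (-s * ∑ j ∈ Finset.range i, (n (κ j) : ℝ))) := by
    intro i
    rw [Finset.mul_sum, Real.exp_sum, ENNReal.ofReal_prod_of_nonneg fun _ _ => (Real.exp_pos _).le]
    refine Finset.prod_le_prod' fun j _ => ?_
    rw [neg_mul, Real.exp_neg, ENNReal.ofReal_inv_of_pos (Real.exp_pos _)]
    refine ENNReal.inv_le_inv.2 ?_
    rw [← ENNReal.ofReal_natCast]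
    exact ENNReal.ofReal_le_ofReal (hW _)
  obtain ⟨I, hI⟩ := eventually_atTop.1 (hgrow (1 / A) (by positivity))
  refine ⟨t I, fun m hm => ?_⟩
  obtain ⟨i, hi1, hi2⟩ := exists_le_and_lt_succ htm (show t 0 ≤ m by omega)
  have hIi : I ≤ i := by
    by_contra hlt
    have := htm.monotone (show i + 1 ≤ I by omega)
    omega
  refine ⟨i, hi1, (hprod i).trans (ENNReal.ofReal_le_ofReal (Real.exp_le_exp.2 ?_))⟩
  have h1 := hL i
  set L := ∑ j ∈ Finset.range i, (n (κ j) : ℝ)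
  have hL0 : 0 ≤ L := Finset.sum_nonneg fun _ _ => Nat.cast_nonneg _
  have h2 : (A : ℝ) * t (i + 1) ≤ (A + 1) * t i := by
    have h := mul_le_mul_of_nonneg_left (hI i hIi) hA'.le
    have h' : (A : ℝ) * (1 / A * t i) = t i := by field_simp
    linarith
  have h3 : (m : ℝ) ≤ t (i + 1) := by exact_mod_cast hi2.le
  have h4 : (A : ℝ) ^ 2 * (τ * m) ≤ A ^ 2 * (s * L) :=
    calc (A : ℝ) ^ 2 * (τ * m) ≤ A ^ 2 * (τ * t (i + 1)) := by gcongr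
      _ = τ * A * (A * t (i + 1)) := by ring
      _ ≤ τ * A * ((A + 1) * t i) := by gcongr
      _ = τ * (A + 1) * (A * t i) := by ring
      _ ≤ τ * (A + 1) * ((A + 1) * L) := by gcongr
      _ = τ * (A + 1) ^ 2 * L := by ring
      _ ≤ s * A ^ 2 * L := by gcongr
      _ = A ^ 2 * (s * L) := by ring
  have h5 := le_of_mul_le_mul_left h4 (by positivity)
  linarith

/-- The approximate level sets contain separated sets of exponential cardinality at arbitrarily
large times. -/
theorem exists_large_separated {X : Type*} [MetricSpace X] (T : X → X) (Φ : ℕ → X → ℝ)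
    (p α : ℕ → ℝ) {ε δ : ℝ} (hε : 0 < ε) (s : ℝ≥0)
    (hlim : (s : ℝ≥0∞) < Filter.atTop.limsup fun n : ℕ =>
      ENNReal.ofReal (Real.log (coverNum T (levelSet T Φ p α δ n) n ε) / (n : ℝ))) (n₀ : ℕ) :
    ∃ n ≥ n₀, ∃ W : Finset X, Real.exp (s * n) ≤ W.card ∧ (∀ x ∈ W, x ∈ levelSet T Φ p α δ n) ∧
      ∀ x ∈ W, ∀ y ∈ W, y ∈ bowenBall T x n ε → x = y := by
  obtain ⟨n, hn, hsn⟩ := ((frequently_lt_of_lt_limsup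
    (h := hlim)).and_eventually (eventually_ge_atTop n₀)).exists.imp fun n h => And.intro h.2 h.1
  obtain ⟨W, hWc, hWS, hW⟩ := exists_separated_of_le_coverNum T (levelSet T Φ p α δ n) n hε _ le_rfl
  refine ⟨n, hn, W, ?_, hWS, hW⟩
  rw [hWc]
  set N := coverNum T (levelSet T Φ p α δ n) n ε
  rw [ENNReal.lt_ofReal_iff_toReal_lt ENNReal.coe_ne_top, ENNReal.coe_toReal] at hsn
  have hpos : 0 < Real.log N / n := lt_of_le_of_lt s.coe_nonneg hsn
  have hn0 : (0 : ℝ) < n := by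
    rcases n.eq_zero_or_pos with h | h
    · simp [h] at hpos
    · exact_mod_cast h
  have hN : (0 : ℝ) < N := by
    rcases Nat.eq_zero_or_pos N with h | h
    · simp [h] at hpos
    · exact_mod_cast h
  rw [lt_div_iff₀ hn0] at hsn
  exact (Real.le_log_iff_exp_le hN).1 hsn.le

/-- A choice of block lengths determines a slowly growing assignment of levels to blocks. -/
theorem exists_levels (q : ℕ → ℕ) (hq : ∀ k, 1 ≤ q k) :
    ∃ b κ : ℕ → ℕ, StrictMono b ∧ b 0 = 0 ∧ (∀ K i, b K ≤ i → i < b (K + 1) → κ i = K) ∧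
      Tendsto κ atTop atTop ∧ ∀ i, κ i * q (κ i) ≤ i := by
  let b : ℕ → ℕ := fun K => ∑ k ∈ Finset.range (K + 1), k * q k
  have hb : StrictMono b := strictMono_nat_of_lt_succ fun K => by
    have h : b (K + 1) = b K + (K + 1) * q (K + 1) := Finset.sum_range_succ _ _
    have : 0 < (K + 1) * q (K + 1) := Nat.mul_pos K.succ_pos (hq (K + 1))
    omega
  have hb0 : b 0 = 0 := by simp [b]
  choose κ hκ1 hκ2 using fun i => exists_le_and_lt_succ hb (show b 0 ≤ i by omega)
  refine ⟨b, κ, hb, hb0, fun K i h1 h2 => ?_, ?_, fun i => ?_⟩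
  · have h3 := hb.lt_iff_lt.1 (h1.trans_lt (hκ2 i))
    have h4 := hb.lt_iff_lt.1 ((hκ1 i).trans_lt h2)
    omega
  · refine tendsto_atTop.2 fun K => ?_
    filter_upwards [eventually_ge_atTop (b K)] with i hi
    have := hb.lt_iff_lt.1 (hi.trans_lt (hκ2 i))
    omega
  · exact (Finset.single_le_sum (f := fun k => k * q k) (fun _ _ => Nat.zero_le _)
      (Finset.self_mem_range_succ (κ i))).trans (hκ1 i)

/-- **Proposition 3.3.** In a system with the specification property, for `(Φ_i)` dense in
the unit ball of `C(X)`, `(p_i)` positive with `Σ p_i = 1`, `μ` invariant and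
`α_i = ∫ Φ_i dμ`, the Bowen entropy of the set of `μ`-generic points satisfies
`h_top(G_μ) ≥ Λ_Φ(α)`. -/
theorem entropy_of_generic_ge_lambda {X : Type*} [MetricSpace X] [CompactSpace X]
    [MeasurableSpace X] [BorelSpace X] (T : X → X) (hT : Continuous T)
    (hspec : SpecificationProperty T)
    (Φ : ℕ → X → ℝ) (hΦc : ∀ i, Continuous (Φ i)) (hΦb : ∀ i x, |Φ i x| ≤ 1)
    (hdense : ∀ f : C(X, ℝ), ‖f‖ ≤ 1 → ∀ ε : ℝ, 0 < ε → ∃ i, ∀ x, |Φ i x - f x| < ε)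
    (p : ℕ → ℝ) (hp : ∀ i, 0 < p i) (hps : Summable p) (hp1 : ∑' i, p i = 1)
    (μ : Measure X) (hμ : IsProbabilityMeasure μ) (hinv : MeasurePreserving T μ μ)
    (α : ℕ → ℝ) (hα : ∀ i, α i = ∫ x, Φ i x ∂μ) :
    LambdaPhi T Φ p α ≤ bowenEntropy T {x : X | IsGeneric T μ x} := by
  have hgood : ∀ f : C(X, ℝ), ∀ γ > 0, ∃ δ > 0, ∀ n : ℕ, ∀ x ∈ levelSet T Φ p α δ n,
      |∑ j ∈ Finset.range n, (f (T^[j] x) - ∫ y, f y ∂μ)| ≤ γ * n := fun f γ hγ =>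
    exists_levelSet_sum_le T Φ hΦc hΦb hdense p hp hps μ α hα f hγ
  refine iSup₂_le fun ε hε => ?_
  set h := ε / 4 with hh_def
  have hh : 0 < h := by positivity
  refine le_trans ?_ (le_iSup₂_of_le h hh le_rfl)
  refine le_sInf ?_
  rintro _ ⟨τ, hτ, rfl⟩
  by_contra hlt
  obtain ⟨s, hs1, hs2⟩ := ENNReal.lt_iff_exists_nnreal_btwn.1 (not_le.1 hlt)
  have hτs : (τ : ℝ) < s := by exact_mod_cast (show (τ : ℝ≥0∞) < s from hs1)
  have hlim : ∀ δ > 0, (s : ℝ≥0∞) < Filter.atTop.limsup fun n : ℕ =>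
      ENNReal.ofReal (Real.log (coverNum T (levelSet T Φ p α δ n) n ε) / (n : ℝ)) :=
    fun δ hδ => hs2.trans_le (iInf₂_le δ hδ)
  obtain ⟨A, hA1, hAs⟩ : ∃ A : ℕ, 1 ≤ A ∧ (τ : ℝ) * (A + 1) ^ 2 ≤ s * A ^ 2 := by
    obtain ⟨A, hA⟩ := exists_nat_gt (3 * (τ : ℝ) / (s - τ))
    refine ⟨A + 1, by omega, ?_⟩
    rw [div_lt_iff₀ (sub_pos.2 hτs)] at hA
    have hA0 : (0 : ℝ) ≤ A := A.cast_nonneg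
    have hτ0 : (0 : ℝ) ≤ τ := τ.coe_nonneg
    push_cast
    nlinarith [mul_le_mul_of_nonneg_right hA.le (show (0 : ℝ) ≤ A + 1 by positivity)]
  choose M hM1 hM using fun K : ℕ => hspec (h / 2 ^ (K + 1)) (by positivity)
  choose n hn W hWcard hWlevel hWsep using fun k : ℕ =>
    exists_large_separated T Φ p α hε s (hlim (1 / ((k : ℝ) + 1)) (by positivity))
      ((k + A) * M k)
  have hn1 : ∀ k, 1 ≤ n k := fun k =>
    (Nat.mul_pos (show 0 < k + A by omega) (hM1 k)).trans_le (hn k)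
  obtain ⟨b, κ, hb, hb0, hκ, hκlim, hκq⟩ := exists_levels (fun k => M k + n k)
    fun k => (hn1 k).trans (Nat.le_add_left _ _)
  let t : ℕ → ℕ := fun i => ∑ j ∈ Finset.range i, (M (κ j) + n (κ j))
  have ht : ∀ i, t (i + 1) = t i + M (κ i) + n (κ i) := fun i => by
    simp only [t, Finset.sum_range_succ]; ring
  have htm : StrictMono t := strictMono_nat_of_lt_succ fun i => by
    have := hn1 (κ i); have := ht i; omega
  have hgrow : ∀ γ > 0, ∀ᶠ i in atTop, (t (i + 1) : ℝ) - t i ≤ γ * t i := by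
    intro γ hγ
    have e : ∀ᶠ k : ℕ in atTop, 1 / γ ≤ (k : ℝ) :=
      tendsto_natCast_atTop_atTop.eventually_ge_atTop _
    filter_upwards [hκlim.eventually e] with i hi
    rw [div_le_iff₀ hγ] at hi
    have h1 : ((κ i * (M (κ i) + n (κ i)) : ℕ) : ℝ) ≤ t i := by
      exact_mod_cast (hκq i).trans htm.le_apply
    push_cast at h1
    rw [ht]
    push_cast
    have h2 : (0 : ℝ) ≤ M (κ i) + n (κ i) := by positivity
    calc (t i : ℝ) + M (κ i) + n (κ i) - t i = 1 * (M (κ i) + n (κ i)) := by ring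
      _ ≤ κ i * γ * (M (κ i) + n (κ i)) := mul_le_mul_of_nonneg_right hi h2
      _ = γ * (κ i * (M (κ i) + n (κ i))) := by ring
      _ ≤ γ * t i := mul_le_mul_of_nonneg_left h1 hγ.le
  have hWne : ∀ i, (W (κ i)).Nonempty := fun i => by
    rw [← Finset.card_pos]
    exact_mod_cast (Real.exp_pos _).trans_le (hWcard (κ i))
  choose Y hY using fun ω : ∀ i, W (κ i) =>
    exists_shadowing T hT hh M n b κ t hM hn1 hb hb0 hκ ht fun i => (ω i : X)
  have hYgen : ∀ ω, IsGeneric T μ (Y ω) := fun ω =>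
    isGeneric_of_shadowing T μ Φ p α hgood h M n κ t hn1
      (fun k => (Nat.mul_le_mul_right _ (Nat.le_add_right k A)).trans (hn k)) hκlim ht hgrow
      (fun i => ω i) (fun i => hWlevel _ _ (ω i).2) (Y ω) (hY ω)
  obtain ⟨m₀, hm₀⟩ := exists_prod_card_inv_le W τ.coe_nonneg hA1 hAs M n κ t hn1
    (fun k => (Nat.mul_le_mul_right _ (Nat.le_add_left A k)).trans (hn k)) hWcard
    (by simp [t]) ht hgrow
  choose! r hrt hr using hm₀
  have hone : 1 ≤ bowenH T {x : X | IsGeneric T μ x} τ h m₀ := by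
    refine le_iInf fun C => le_iInf fun hC => le_iInf fun hCm => le_iInf fun hcov => ?_
    refine (one_le_tsum_of_cover (fun i => W (κ i)) hWne C hC
      (fun q => {ω | Y ω ∈ bowenBall T q.1 q.2 h})
      (fun ω => by simpa using hcov (hYgen ω)) (fun q => r q.2) ?_).trans
      (ENNReal.tsum_le_tsum fun q => hr _ (hCm q q.2))
    intro q hq ω hω ω' hω' i hi
    refine Subtype.ext (hWsep (κ i) _ (ω i).2 _ (ω' i).2 fun j hj => ?_)
    have hle : t i + M (κ i) + j < q.2 := by
      have h1 := htm.monotone (show i + 1 ≤ r q.2 from hi)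
      have h2 := hrt _ (hCm q hq)
      have h3 := ht i
      omega
    have d1 := hω _ hle
    have d2 := hω' _ hle
    have d3 := hY ω i j hj
    have d4 := hY ω' i j hj
    have d5 : h / 2 ^ κ i ≤ h := div_le_self hh.le (one_le_pow₀ one_le_two)
    have d6 := dist_triangle4 (T^[j] (ω i)) (T^[t i + M (κ i) + j] (Y ω))
      (T^[t i + M (κ i) + j] (Y ω')) (T^[j] (ω' i))
    have d7 := dist_triangle_left (T^[t i + M (κ i) + j] (Y ω))
      (T^[t i + M (κ i) + j] (Y ω')) (T^[t i + M (κ i) + j] q.1)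
    rw [dist_comm (T^[j] (ω i : X)) (T^[t i + M (κ i) + j] (Y ω))] at d6
    have d8 : ε = 4 * h := by rw [hh_def]; ring
    linarith
  have hzero : bowenH T {x : X | IsGeneric T μ x} τ h m₀ = 0 :=
    le_antisymm ((le_iSup (fun m => bowenH T {x : X | IsGeneric T μ x} τ h m) m₀).trans
      (le_of_eq hτ)) zero_le
  rw [hzero] at hone
  exact absurd hone (by simp)
end
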